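/- arXiv:cs/0508037 — 2 statements merged into one kernel-verified Lean document; each statement's English description precedes it below -/
import Mathlib

section
/- Let r ≤ 0.546 be a fixed real number. For each n, let φ_n be a random EC3 formula on n variables with m = ⌊rn⌋ clauses, each clause chosen independently and uniformly with replacement from the C(n,3) possible 3-element clauses. Then there exists δ > 0 such that for all sufficiently large n, Pr[φ_n is satisfiable] ≥ δ (i.e., the satisfiability probability is bounded away from 0). -/
open Filter Topology

/-- A clause of an EC3 (Positive 1-in-3 SAT) formula on `n` variables:
a 3-element subset of the variables. -/
def EC3Clause (n : ℕ) := {c : Finset (Fin n) // c.card = 3}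

/-- An assignment satisfies a clause if exactly one of its variables is true. -/
def ClauseSat {n : ℕ} (σ : Fin n → Bool) (c : Finset (Fin n)) : Prop :=
  (c.filter fun v => σ v = true).card = 1

/-- A formula (a length-`m` tuple of clauses, i.e. a multiset of clauses with
multiplicity recorded by indices) is satisfiable if some assignment satisfies
every clause. -/
def FormulaSatisfiable {n m : ℕ} (φ : Fin m → EC3Clause n) : Prop :=
  ∃ σ : Fin n → Bool, ∀ i : Fin m, ClauseSat σ (φ i).1

/-- The probability that a random EC3 formula on `n` variables with `m` clauses,
each chosen independently and uniformly with replacement among the `C(n,3)`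
possible clauses, is satisfiable. -/
noncomputable def Psat (n m : ℕ) : ℝ :=
  (Nat.card {φ : Fin m → EC3Clause n // FormulaSatisfiable φ} : ℝ) /
    (Nat.card (Fin m → EC3Clause n) : ℝ)

/-!
Second moment method on the balanced assignments, those that make exactly a third of the `n = 3 * k`
variables true. Grouping the pairs of balanced assignments by the number `A` of common true
variables, the normalized second moment is `∑ A, overlapProb n k A * clauseCorr n k A ^ m`, and by
Cauchy–Schwarz the satisfiability probability is at least its inverse. With `x = A / k`, the summand
is at most a polynomial factor times `exp (k * secondMomentRate c x)`, where `m ≤ c * k`. Both the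
overlap entropy and the logarithm of the clause correlation are stationary at the typical overlap
`x = 1 / 3`, and up to `c = 41 / 25`, that is `r = 41 / 75 > 0.546`, the concave entropy still wins
and the rate is at most a negative multiple of `(x - 1 / 3) ^ 2`. The sum is then Gaussian of width
`√k`; it is bounded by comparing each term with a Cauchy kernel and telescoping arctangents. If
`3` does not divide `n`, ignoring the one or two extra variables costs only a constant factor.
-/

namespace EC3

open Finset Real

/-! ### Second moments and intersection counts -/

section Counting

variable {α ι Ω : Type*}

lemma sum_card_eq_sum_card_filter_mem [DecidableEq Ω] {I : Finset ι} {E : ι → Finset Ω}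
    {U : Finset Ω} (hE : ∀ i ∈ I, E i ⊆ U) : ∑ i ∈ I, #(E i) = ∑ ω ∈ U, #{i ∈ I | ω ∈ E i} := by
  refine Eq.trans (sum_congr rfl fun i hi => ?_)
    (sum_card_bipartiteAbove_eq_sum_card_bipartiteBelow (fun i ω => ω ∈ E i))
  rw [bipartiteAbove, filter_mem_eq_inter, inter_eq_right.2 (hE i hi)]

/-- The second moment inequality `P(X > 0) E[X²] ≥ E[X]²` for the number `X` of events `E i` that
occur, in counting form. -/
lemma sq_sum_card_le_card_biUnion_mul [DecidableEq Ω] (I : Finset ι) (E : ι → Finset Ω) :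
    (∑ i ∈ I, #(E i)) ^ 2 ≤ #(I.biUnion E) * ∑ i ∈ I, ∑ j ∈ I, #(E i ∩ E j) := by
  have hE : ∀ i ∈ I, E i ⊆ I.biUnion E := fun i hi => subset_biUnion_of_mem E hi
  have hpairs : ∑ i ∈ I, ∑ j ∈ I, #(E i ∩ E j) = ∑ ω ∈ I.biUnion E, #{i ∈ I | ω ∈ E i} ^ 2 := by
    rw [← sum_product', sum_card_eq_sum_card_filter_mem (U := I.biUnion E)]
    · exact sum_congr rfl fun ω _ => by
        simp only [mem_inter, sq, ← card_product, ← filter_product]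
    · exact fun p hp => inter_subset_left.trans (hE p.1 (mem_product.1 hp).1)
  rw [hpairs, sum_card_eq_sum_card_filter_mem hE]
  exact sq_sum_le_card_mul_sum_sq

variable [Fintype α]

lemma card_filter_forall_card_fiber_eq [Fintype ι] [DecidableEq ι] (f : α → ι) (a : ι → ℕ) :
    #{s : Finset α | ∀ i, #{x ∈ s | f x = i} = a i} = ∏ i, (#{x | f x = i}).choose (a i) := by
  classical
  simp only [← card_powersetCard]
  rw [← Fintype.card_piFinset]
  have hfiber : ∀ g ∈ Fintype.piFinset fun i => powersetCard (a i) {x | f x = i},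
      ∀ i, {x ∈ univ.biUnion g | f x = i} = g i := by
    intro g hg i
    simp only [Fintype.mem_piFinset, mem_powersetCard, subset_iff, mem_filter, mem_univ,
      true_and] at hg
    ext x
    simp only [mem_filter, mem_biUnion, mem_univ, true_and]
    exact ⟨fun ⟨⟨j, hxj⟩, hxi⟩ => hxi.symm.trans ((hg j).1 hxj) ▸ hxj,
      fun hx => ⟨⟨i, hx⟩, (hg i).1 hx⟩⟩
  refine card_bij' (fun s _ i => {x ∈ s | f x = i}) (fun g _ => univ.biUnion g) ?_ ?_ ?_ ?_
  · intro s hs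
    simpa [mem_powersetCard, filter_subset_filter] using hs
  · intro g hg
    simp only [mem_filter, mem_univ, true_and, hfiber g hg]
    exact fun i => (mem_powersetCard.1 (Fintype.mem_piFinset.1 hg i)).2
  · intro s _
    ext x
    simp
  · exact fun g hg => funext (hfiber g hg)

variable [DecidableEq α]

lemma card_filter_card_inter_eq (s : Finset α) {k a : ℕ} (ha : a ≤ k) :
    #{t ∈ powersetCard k univ | #(s ∩ t) = a} = (#s).choose a * (#sᶜ).choose (k - a) := by
  have h := card_filter_forall_card_fiber_eq (fun x => decide (x ∈ s)) (fun b => cond b a (k - a))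
  simp only [Fintype.prod_bool, Bool.forall_bool, decide_eq_true_eq, decide_eq_false_iff_not,
    cond_true, cond_false, filter_mem_eq_inter, filter_notMem_eq_sdiff, univ_inter,
    ← compl_eq_univ_sdiff] at h
  rw [← h]
  congr 1
  ext t
  have := card_sdiff_add_card_inter t s
  simp only [mem_filter, mem_powersetCard, subset_univ, true_and, mem_univ, inter_comm s t]
  omega

lemma sum_powersetCard_card_inter {R : Type*} [CommSemiring R] (s : Finset α) (k : ℕ)
    (f : ℕ → R) :
    ∑ t ∈ powersetCard k univ, f #(s ∩ t) =
      ∑ a ∈ range (k + 1), ((#s).choose a : R) * (#sᶜ).choose (k - a) * f a := by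
  rw [← sum_fiberwise_of_maps_to (t := range (k + 1)) (g := fun t => #(s ∩ t))]
  · refine sum_congr rfl fun a ha => ?_
    rw [sum_congr rfl (g := fun _ => f a) fun t ht => by rw [(mem_filter.1 ht).2], sum_const,
      nsmul_eq_mul, card_filter_card_inter_eq s (Nat.lt_succ_iff.1 (mem_range.1 ha)), Nat.cast_mul]
  · intro t ht
    rw [mem_range, Nat.lt_succ_iff, ← (mem_powersetCard.1 ht).2]
    exact card_le_card inter_subset_right

lemma card_filter_card_inter_inter_eq (s t : Finset α) (a b c d : ℕ) :
    #{u : Finset α | #(u ∩ s ∩ t) = a ∧ #((u ∩ s) \ t) = b ∧ #((u ∩ t) \ s) = c ∧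
      #((u \ s) \ t) = d} =
      (#(s ∩ t)).choose a * (#(s \ t)).choose b * (#(t \ s)).choose c * (#(s ∪ t)ᶜ).choose d := by
  have h := card_filter_forall_card_fiber_eq (fun x => (decide (x ∈ s), decide (x ∈ t)))
    (fun p => cond p.1 (cond p.2 a b) (cond p.2 c d))
  simp only [Prod.forall, Bool.forall_bool, Fintype.prod_prod_type, Fintype.prod_bool,
    Prod.mk.injEq, decide_eq_true_eq, decide_eq_false_iff_not, cond_true, cond_false,
    ← filter_filter, filter_mem_eq_inter, filter_notMem_eq_sdiff, sdiff_inter_right_comm,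
    univ_inter] at h
  rw [compl_union, ← sdiff_eq_inter_compl, compl_eq_univ_sdiff, mul_assoc _ (Nat.choose _ c), ← h]
  congr 1
  ext u
  simp only [mem_filter, mem_univ, true_and]
  tauto

/-- Either the same element of `c` lies in both sets, or two different ones do. -/
lemma card_filter_card_inter_eq_one_and (s t : Finset α) :
    #{c ∈ powersetCard 3 univ | #(c ∩ s) = 1 ∧ #(c ∩ t) = 1} =
      #(s ∩ t) * (#(s ∪ t)ᶜ).choose 2 + #(s \ t) * #(t \ s) * #(s ∪ t)ᶜ := by
  have hsame := card_filter_card_inter_inter_eq s t 1 0 0 2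
  have hdiff := card_filter_card_inter_inter_eq s t 0 1 1 1
  simp only [Nat.choose_one_right, Nat.choose_zero_right, mul_one, one_mul] at hsame hdiff
  rw [← hsame, ← hdiff, ← card_union_of_disjoint, ← filter_or]
  · congr 1
    ext c
    have h₁ := card_inter_add_card_sdiff c s
    have h₂ := card_inter_add_card_sdiff (c ∩ s) t
    have h₃ := card_inter_add_card_sdiff (c \ s) t
    have h₄ := card_inter_add_card_sdiff (c ∩ t) s
    rw [inter_right_comm] at h₄
    rw [sdiff_inter_right_comm] at h₃
    simp only [mem_filter, mem_powersetCard, subset_univ, true_and, mem_univ]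
    omega
  · exact disjoint_filter.2 fun c _ h₁ h₂ => by omega

end Counting

/-! ### The second moment over assignments of fixed weight -/

section SecondMoment

variable {n k : ℕ}

instance : Fintype (EC3Clause n) := inferInstanceAs (Fintype {c : Finset (Fin n) // #c = 3})

instance : DecidableEq (EC3Clause n) :=
  inferInstanceAs (DecidableEq {c : Finset (Fin n) // #c = 3})

/-- The clauses satisfied by the assignment that is true exactly on `S`. -/
def satClauses (S : Finset (Fin n)) : Finset (EC3Clause n) := {c | #(c.1 ∩ S) = 1}

lemma mem_satClauses {S : Finset (Fin n)} {c : EC3Clause n} :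
    c ∈ satClauses S ↔ ClauseSat (fun v => decide (v ∈ S)) c.1 := by
  simp only [satClauses, ClauseSat, mem_filter, mem_univ, true_and, decide_eq_true_eq,
    filter_mem_eq_inter]

lemma card_filter_clause (p : Finset (Fin n) → Prop) [DecidablePred p] :
    #{c : EC3Clause n | p c.1} = #{c ∈ powersetCard 3 univ | p c} := by
  refine card_bij (fun c _ => c.1) ?_ (fun _ _ _ _ => Subtype.ext) ?_
  · intro c hc
    simpa only [mem_filter, mem_powersetCard, subset_univ, c.2, true_and, mem_univ] using hc
  · intro c hc
    simp only [mem_filter, mem_powersetCard, subset_univ, true_and] at hc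
    exact ⟨⟨c, hc.1⟩, mem_filter.2 ⟨mem_univ _, hc.2⟩, rfl⟩

lemma card_clause : Fintype.card (EC3Clause n) = n.choose 3 := by
  simpa only [filter_true, card_univ, card_powersetCard, Fintype.card_fin] using
    card_filter_clause (n := n) fun _ => True

lemma card_satClauses (S : Finset (Fin n)) : #(satClauses S) = #S * (#Sᶜ).choose 2 := by
  rw [satClauses, card_filter_clause fun c => #(c ∩ S) = 1]
  simp only [inter_comm _ S]
  rw [card_filter_card_inter_eq S (by norm_num), Nat.choose_one_right]

/-- The number of clauses on `n` variables that are satisfied by both of two assignments with `k`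
true variables each, `A` of them in common. -/
def pairCount (n k A : ℕ) : ℕ :=
  A * (n - (2 * k - A)).choose 2 + (k - A) * (k - A) * (n - (2 * k - A))

lemma card_satClauses_inter {S T : Finset (Fin n)} (hS : #S = k) (hT : #T = k) :
    #(satClauses S ∩ satClauses T) = pairCount n k #(S ∩ T) := by
  have hST := card_inter_add_card_sdiff S T
  have hTS := card_inter_add_card_sdiff T S
  have hunion := card_union_add_card_inter S T
  rw [inter_comm T S] at hTS
  rw [satClauses, satClauses, ← filter_and,
    card_filter_clause fun c => #(c ∩ S) = 1 ∧ #(c ∩ T) = 1, card_filter_card_inter_eq_one_and,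
    pairCount, card_compl, Fintype.card_fin, show #(S \ T) = k - #(S ∩ T) by omega,
    show #(T \ S) = k - #(S ∩ T) by omega, show #(S ∪ T) = 2 * k - #(S ∩ T) by omega]

lemma card_biUnion_piFinset_satClauses_le (I : Finset (Finset (Fin n))) (m : ℕ) :
    #(I.biUnion fun S => Fintype.piFinset fun _ : Fin m => satClauses S) ≤
      Nat.card {φ : Fin m → EC3Clause n // FormulaSatisfiable φ} := by
  classical
  rw [Nat.card_eq_fintype_card, Fintype.card_subtype]
  refine card_le_card fun φ hφ => ?_
  obtain ⟨S, -, hS⟩ := mem_biUnion.1 hφ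
  exact mem_filter.2 ⟨mem_univ _, _, fun i => mem_satClauses.1 (Fintype.mem_piFinset.1 hS i)⟩

lemma sum_sum_card_piFinset_inter (n k m : ℕ) :
    ∑ S ∈ powersetCard k univ, ∑ T ∈ powersetCard k univ,
        #((Fintype.piFinset fun _ : Fin m => satClauses S) ∩
          Fintype.piFinset fun _ : Fin m => satClauses (n := n) T) =
      n.choose k * ∑ A ∈ range (k + 1), k.choose A * (n - k).choose (k - A) *
        pairCount n k A ^ m := by
  have hS : ∀ S ∈ powersetCard k (univ : Finset (Fin n)), ∑ T ∈ powersetCard k univ,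
      #((Fintype.piFinset fun _ : Fin m => satClauses S) ∩
        Fintype.piFinset fun _ : Fin m => satClauses T) =
      ∑ A ∈ range (k + 1), k.choose A * (n - k).choose (k - A) * pairCount n k A ^ m := by
    intro S hS
    have hSk := (mem_powersetCard.1 hS).2
    have h := sum_powersetCard_card_inter S k fun A => pairCount n k A ^ m
    simp only [card_compl, Fintype.card_fin, hSk, Nat.cast_id] at h
    rw [← h]
    refine sum_congr rfl fun T hT => ?_
    rw [← Fintype.piFinset_inter, Fintype.card_piFinset_const,
      card_satClauses_inter hSk (mem_powersetCard.1 hT).2]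
  rw [sum_congr rfl hS, sum_const, card_powersetCard, card_univ, Fintype.card_fin, smul_eq_mul]

/-- The probability that two independent uniform `k`-subsets of an `n`-set share `A` elements. -/
noncomputable def overlapProb (n k A : ℕ) : ℝ :=
  k.choose A * (n - k).choose (k - A) / n.choose k

/-- The probability that a random clause is satisfied by both of two assignments with `k` true
variables each, `A` of them in common, divided by the value it would have if the two events were
independent. -/
noncomputable def clauseCorr (n k A : ℕ) : ℝ :=
  pairCount n k A * n.choose 3 / (k * (n - k).choose 2 : ℝ) ^ 2

lemma sq_choose_mul_pow_le (n k m : ℕ) :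
    (n.choose k * (k * (n - k).choose 2) ^ m) ^ 2 ≤
      Nat.card {φ : Fin m → EC3Clause n // FormulaSatisfiable φ} *
        (n.choose k * ∑ A ∈ range (k + 1), k.choose A * (n - k).choose (k - A) *
          pairCount n k A ^ m) := by
  rw [← sum_sum_card_piFinset_inter]
  refine le_trans (le_of_eq ?_) ((sq_sum_card_le_card_biUnion_mul (powersetCard k univ)
    fun S => Fintype.piFinset fun _ : Fin m => satClauses S).trans
      (Nat.mul_le_mul_right _ (card_biUnion_piFinset_satClauses_le _ m)))
  have hE : ∀ S ∈ powersetCard k (univ : Finset (Fin n)),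
      #(Fintype.piFinset fun _ : Fin m => satClauses S) = (k * (n - k).choose 2) ^ m := by
    intro S hS
    rw [Fintype.card_piFinset_const, card_satClauses, card_compl, Fintype.card_fin,
      (mem_powersetCard.1 hS).2]
  rw [sum_congr rfl hE, sum_const, card_powersetCard, card_univ, Fintype.card_fin, smul_eq_mul]

/-- The sum is the ratio of the second moment of the number of satisfying assignments with `k` true
variables to the square of its mean. -/
lemma one_le_Psat_mul_sum (hk : 1 ≤ k) (hkn : k + 2 ≤ n) (m : ℕ) :
    1 ≤ Psat n m * ∑ A ∈ range (k + 1), overlapProb n k A * clauseCorr n k A ^ m := by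
  have hD : (0 : ℝ) < k * (n - k).choose 2 := by
    have := Nat.choose_pos (n := n - k) (k := 2) (by omega)
    positivity
  have hC : (0 : ℝ) < n.choose k := by exact_mod_cast Nat.choose_pos (by omega)
  have hN : (0 : ℝ) < n.choose 3 := by exact_mod_cast Nat.choose_pos (by omega)
  have hsum : ∑ A ∈ range (k + 1), overlapProb n k A * clauseCorr n k A ^ m =
      (∑ A ∈ range (k + 1), (k.choose A : ℝ) * (n - k).choose (k - A) * pairCount n k A ^ m) *
        (n.choose 3 ^ m / (n.choose k * ((k * (n - k).choose 2 : ℝ) ^ m) ^ 2)) := by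
    rw [sum_mul]
    refine sum_congr rfl fun A _ => ?_
    rw [overlapProb, clauseCorr, div_pow, mul_pow]
    ring
  have hmoment : ((n.choose k : ℝ) * (k * (n - k).choose 2) ^ m) ^ 2 ≤
      Nat.card {φ : Fin m → EC3Clause n // FormulaSatisfiable φ} * (n.choose k *
        ∑ A ∈ range (k + 1), (k.choose A : ℝ) * (n - k).choose (k - A) * pairCount n k A ^ m) := by
    exact_mod_cast sq_choose_mul_pow_le n k m
  rw [hsum, Psat, Nat.card_fun, Nat.card_eq_fintype_card (α := EC3Clause n), card_clause,
    Nat.card_fin, Nat.cast_pow, ← mul_assoc, div_mul_eq_mul_div, div_mul_div_comm,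
    one_le_div (by positivity), ← mul_le_mul_iff_left₀ hC]
  linear_combination (n.choose 3 : ℝ) ^ m * hmoment

end SecondMoment

/-! ### The exponential rate of the second moment -/

section Rate

lemma le_tangent_parabola_of_strongConcaveOn {s : Set ℝ} {f : ℝ → ℝ} {m f' u x : ℝ}
    (hf : StrongConcaveOn s m f) (hu : u ∈ s) (hx : x ∈ s) (hd : HasDerivAt f f' u) :
    f x ≤ f u + f' * (x - u) - m / 2 * (x - u) ^ 2 := by
  have hg := strongConcaveOn_iff_convex.1 hf
  have hgd : HasDerivAt (fun y => f y + m / 2 * ‖y‖ ^ 2) (f' + m * u) u := by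
    simp only [norm_eq_abs, sq_abs]
    exact (hd.add ((hasDerivAt_pow 2 u).const_mul (m / 2))).congr_deriv (by norm_num; ring)
  rcases lt_trichotomy u x with h | rfl | h
  · have := hg.slope_le_of_hasDerivAt hu hx h hgd
    rw [slope_def_field, div_le_iff₀ (sub_pos.2 h)] at this
    simp only [norm_eq_abs, sq_abs] at this
    linarith
  · simp
  · have := hg.le_slope_of_hasDerivAt hx hu h hgd
    rw [slope_def_field, le_div_iff₀ (sub_pos.2 h)] at this
    simp only [norm_eq_abs, sq_abs] at this
    linarith

/-- The exponential rate of the probability that two uniform `k`-subsets of a `3 * k`-set share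
`x * k` elements. -/
noncomputable def overlapEntropy (x : ℝ) : ℝ :=
  negMulLog x + 2 * negMulLog (1 - x) + negMulLog (1 + x) + 4 * log 2 - 3 * log 3

/-- The derivative of `overlapEntropy` on `(0, 1)`. -/
noncomputable def entropySlope (x : ℝ) : ℝ := 2 * log (1 - x) - log x - log (1 + x)

/-- The limit of `clauseCorr (3 * k) k A` as `k → ∞` and `A / k → x`. -/
noncomputable def corr (x : ℝ) : ℝ := 9 / 16 * (2 - x + 3 * x ^ 3)

/-- The exponential rate, per true variable, of the contribution of the pairs of assignments with
overlap `x` to the second moment when there are `c` clauses per true variable. -/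
noncomputable def secondMomentRate (c x : ℝ) : ℝ := overlapEntropy x + c * log (corr x)

lemma corr_eq (x : ℝ) : corr x = 1 + 27 / 16 * ((x - 1 / 3) ^ 2 * (x + 2 / 3)) := by
  rw [corr]
  ring

lemma one_le_corr {x : ℝ} (hx : 0 ≤ x) : 1 ≤ corr x := by
  rw [corr_eq, le_add_iff_nonneg_right]
  positivity

lemma corr_pos {x : ℝ} (hx : 0 ≤ x) : 0 < corr x := one_pos.trans_le (one_le_corr hx)

lemma hasDerivAt_overlapEntropy {x : ℝ} (hx : x ∈ Set.Ioo 0 1) :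
    HasDerivAt overlapEntropy (entropySlope x) x := by
  have h₀ := hasDerivAt_negMulLog hx.1.ne'
  have h₁ := (hasDerivAt_negMulLog (sub_pos.2 hx.2).ne').comp x ((hasDerivAt_id x).const_sub 1)
  have h₂ := (hasDerivAt_negMulLog (add_pos one_pos hx.1).ne').comp x
    ((hasDerivAt_id x).const_add 1)
  exact ((((h₀.add (h₁.const_mul 2)).add h₂).add_const (4 * log 2)).sub_const
    (3 * log 3)).congr_deriv (by rw [entropySlope]; ring)

lemma hasDerivAt_entropySlope {x : ℝ} (hx : x ∈ Set.Ioo 0 1) :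
    HasDerivAt entropySlope (-(2 / (1 - x) + 1 / x + 1 / (1 + x))) x := by
  have h₀ := hasDerivAt_log hx.1.ne'
  have h₁ := ((hasDerivAt_id x).const_sub 1).log (sub_pos.2 hx.2).ne'
  have h₂ := ((hasDerivAt_id x).const_add 1).log (add_pos one_pos hx.1).ne'
  exact (((h₁.const_mul 2).sub h₀).sub h₂).congr_deriv (by simp only [id]; ring)

lemma overlapEntropy_second_deriv_le {x : ℝ} (hx : x ∈ Set.Ioo 0 1) :
    -(2 / (1 - x) + 1 / x + 1 / (1 + x)) ≤ -(13 / 2) := by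
  obtain ⟨h₀, h₁⟩ := hx
  have hden : 0 < x * (1 - x) * (1 + x) := by
    have := sub_pos.2 h₁
    positivity
  have hne : 1 - x ≠ 0 := (sub_pos.2 h₁).ne'
  have hsum : 2 / (1 - x) + 1 / x + 1 / (1 + x) - 13 / 2 =
      (13 / 2 * x ^ 3 - 7 / 2 * x + 1) / (x * (1 - x) * (1 + x)) := by
    field_simp
    ring
  have hcubic : 0 ≤ 13 / 2 * x ^ 3 - 7 / 2 * x + 1 := by
    nlinarith [mul_nonneg h₀.le (sq_nonneg (x - 3 / 7)), sq_nonneg (x - 3 / 7)]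
  have := hsum ▸ div_nonneg hcubic hden.le
  linarith

lemma strongConcaveOn_overlapEntropy : StrongConcaveOn (Set.Icc 0 1) (13 / 2) overlapEntropy := by
  rw [strongConcaveOn_iff_convex]
  simp only [norm_eq_abs, sq_abs]
  refine concaveOn_of_hasDerivWithinAt2_nonpos (convex_Icc 0 1)
    (f' := fun x => entropySlope x + 13 / 2 * x)
    (f'' := fun x => -(2 / (1 - x) + 1 / x + 1 / (1 + x)) + 13 / 2) ?_ ?_ ?_ ?_
  · unfold overlapEntropy
    fun_prop
  all_goals
    rw [interior_Icc]
    intro x hx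
  · exact ((hasDerivAt_overlapEntropy hx).add ((hasDerivAt_pow 2 x).const_mul _)).congr_deriv
      (by norm_num; ring) |>.hasDerivWithinAt
  · exact ((hasDerivAt_entropySlope hx).add ((hasDerivAt_id x).const_mul _)).congr_deriv
      (by ring) |>.hasDerivWithinAt
  · linarith [overlapEntropy_second_deriv_le hx]

lemma secondMomentRate_le_tangent {c u x : ℝ} (hc : 0 ≤ c) (hu : u ∈ Set.Ioo 0 1)
    (hx : x ∈ Set.Icc 0 1) :
    secondMomentRate c x ≤ secondMomentRate c u + entropySlope u * (x - u) -
      13 / 4 * (x - u) ^ 2 + c * (corr x / corr u - 1) := by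
  have hcu := corr_pos hu.1.le
  have hcx := corr_pos hx.1
  have hent := le_tangent_parabola_of_strongConcaveOn strongConcaveOn_overlapEntropy
    (Set.Ioo_subset_Icc_self hu) hx (hasDerivAt_overlapEntropy hu)
  have hlog : log (corr x) ≤ log (corr u) + (corr x / corr u - 1) := by
    have := log_le_sub_one_of_pos (div_pos hcx hcu)
    rw [log_div hcx.ne' hcu.ne'] at this
    linarith
  have := mul_le_mul_of_nonneg_left hlog hc
  rw [secondMomentRate, secondMomentRate]
  linarith

lemma log_eq_of_eq_zpow {y : ℝ} {a b c : ℤ} (h : y = 2 ^ a * 3 ^ b * 5 ^ c) :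
    log y = a * log 2 + b * log 3 + c * log 5 := by
  rw [h, log_mul (by positivity) (by positivity), log_mul (by positivity) (by positivity),
    log_zpow, log_zpow, log_zpow]

lemma overlapEntropy_one_third : overlapEntropy (1 / 3) = 0 := by
  rw [overlapEntropy, negMulLog, negMulLog, negMulLog,
    log_eq_of_eq_zpow (y := 1 / 3) (a := 0) (b := -1) (c := 0) (by norm_num),
    log_eq_of_eq_zpow (y := 1 - 1 / 3) (a := 1) (b := -1) (c := 0) (by norm_num),
    log_eq_of_eq_zpow (y := 1 + 1 / 3) (a := 2) (b := -1) (c := 0) (by norm_num)]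
  push_cast
  ring

lemma entropySlope_one_third : entropySlope (1 / 3) = 0 := by
  rw [entropySlope, log_eq_of_eq_zpow (y := 1 / 3) (a := 0) (b := -1) (c := 0) (by norm_num),
    log_eq_of_eq_zpow (y := 1 - 1 / 3) (a := 1) (b := -1) (c := 0) (by norm_num),
    log_eq_of_eq_zpow (y := 1 + 1 / 3) (a := 2) (b := -1) (c := 0) (by norm_num)]
  push_cast
  ring

lemma secondMomentRate_le_of_le_half {x : ℝ} (hx : x ∈ Set.Icc 0 (1 / 2)) :
    secondMomentRate (41 / 25) x ≤ -(1 / 1000 * (x - 1 / 3) ^ 2) := by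
  have h := secondMomentRate_le_tangent (c := 41 / 25) (u := 1 / 3) (by norm_num) (by norm_num)
    ⟨hx.1, hx.2.trans (by norm_num)⟩
  have hone : corr (1 / 3) = 1 := by norm_num [corr]
  have hrate : secondMomentRate (41 / 25) (1 / 3) = 0 := by
    rw [secondMomentRate, overlapEntropy_one_third, hone, log_one]
    ring
  rw [hrate, entropySlope_one_third, hone, corr_eq] at h
  linarith [mul_nonneg (sq_nonneg (x - 1 / 3)) (sub_nonneg.2 hx.2), sq_nonneg (x - 1 / 3)]

lemma secondMomentRate_le_of_approx {u x E D : ℝ} (hu : u ∈ Set.Ioo 0 1) (hx : x ∈ Set.Icc 0 1)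
    (hE : secondMomentRate (41 / 25) u ≤ E) (hD : |entropySlope u - D| ≤ 1 / 10 ^ 6)
    (h : E + D * (x - u) + 1 / 10 ^ 6 - 13 / 4 * (x - u) ^ 2 + 41 / 25 * (corr x / corr u - 1) ≤
      -(1 / 1000)) :
    secondMomentRate (41 / 25) x ≤ -(1 / 1000) := by
  have hxu : |x - u| ≤ 1 := abs_le.2 ⟨by linarith [hx.1, hu.2], by linarith [hx.2, hu.1]⟩
  have herr : (entropySlope u - D) * (x - u) ≤ 1 / 10 ^ 6 * 1 :=
    (le_abs_self _).trans
      ((abs_mul _ _).trans_le (mul_le_mul hD hxu (abs_nonneg _) (by norm_num)))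
  linarith [secondMomentRate_le_tangent (c := 41 / 25) (by norm_num) hu hx]

lemma secondMomentRate_le_near_half {x : ℝ} (hx : x ∈ Set.Icc 0.5 0.56) :
    secondMomentRate (41 / 25) x ≤ -(1 / 1000) := by
  have hu := log_eq_of_eq_zpow (y := 1 / 2) (a := -1) (b := 0) (c := 0) (by norm_num)
  have hsub := log_eq_of_eq_zpow (y := 1 - 1 / 2) (a := -1) (b := 0) (c := 0) (by norm_num)
  have hadd := log_eq_of_eq_zpow (y := 1 + 1 / 2) (a := -1) (b := 1) (c := 0) (by norm_num)
  have hcorr : corr (1 / 2) = 135 / 128 := by norm_num [corr]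
  have hlog := log_eq_of_eq_zpow (y := 135 / 128) (a := -7) (b := 3) (c := 1) (by norm_num)
  push_cast at hu hsub hadd hlog
  refine secondMomentRate_le_of_approx (u := 1 / 2) (E := -0.004404) (D := -1.098612) (by norm_num)
    ⟨by linarith [hx.1], by linarith [hx.2]⟩ ?_ ?_ ?_
  · rw [secondMomentRate, overlapEntropy, negMulLog, negMulLog, negMulLog, hcorr, hu, hsub, hadd,
      hlog]
    linarith [log_two_lt_d9, log_two_gt_d9, log_three_lt_d9, log_three_gt_d9, log_five_lt_d9,
      log_five_gt_d9]
  · rw [entropySlope, hu, hsub, hadd, abs_le]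
    constructor <;> linarith [log_two_lt_d9, log_two_gt_d9, log_three_lt_d9, log_three_gt_d9,
      log_five_lt_d9, log_five_gt_d9]
  · have hprod := mul_nonneg (sub_nonneg.2 hx.1) (sub_nonneg.2 hx.2)
    rw [hcorr, corr]
    nlinarith [hx.1, hx.2, mul_nonneg hprod (sub_nonneg.2 hx.1)]

lemma secondMomentRate_le_near_three_fifths {x : ℝ} (hx : x ∈ Set.Icc 0.56 0.64) :
    secondMomentRate (41 / 25) x ≤ -(1 / 1000) := by
  have hu := log_eq_of_eq_zpow (y := 3 / 5) (a := 0) (b := 1) (c := -1) (by norm_num)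
  have hsub := log_eq_of_eq_zpow (y := 1 - 3 / 5) (a := 1) (b := 0) (c := -1) (by norm_num)
  have hadd := log_eq_of_eq_zpow (y := 1 + 3 / 5) (a := 3) (b := 0) (c := -1) (by norm_num)
  have hcorr : corr (3 / 5) = 144 / 125 := by norm_num [corr]
  have hlog := log_eq_of_eq_zpow (y := 144 / 125) (a := 4) (b := 2) (c := -3) (by norm_num)
  push_cast at hu hsub hadd hlog
  refine secondMomentRate_le_of_approx (u := 3 / 5) (E := -0.003666) (D := -1.791759) (by norm_num)
    ⟨by linarith [hx.1], by linarith [hx.2]⟩ ?_ ?_ ?_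
  · rw [secondMomentRate, overlapEntropy, negMulLog, negMulLog, negMulLog, hcorr, hu, hsub, hadd,
      hlog]
    linarith [log_two_lt_d9, log_two_gt_d9, log_three_lt_d9, log_three_gt_d9, log_five_lt_d9,
      log_five_gt_d9]
  · rw [entropySlope, hu, hsub, hadd, abs_le]
    constructor <;> linarith [log_two_lt_d9, log_two_gt_d9, log_three_lt_d9, log_three_gt_d9,
      log_five_lt_d9, log_five_gt_d9]
  · have hprod := mul_nonneg (sub_nonneg.2 hx.1) (sub_nonneg.2 hx.2)
    rw [hcorr, corr]
    nlinarith [hx.1, hx.2, mul_nonneg hprod (sub_nonneg.2 hx.1)]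

lemma secondMomentRate_le_near_two_thirds {x : ℝ} (hx : x ∈ Set.Icc 0.64 0.74) :
    secondMomentRate (41 / 25) x ≤ -(1 / 1000) := by
  have hu := log_eq_of_eq_zpow (y := 2 / 3) (a := 1) (b := -1) (c := 0) (by norm_num)
  have hsub := log_eq_of_eq_zpow (y := 1 - 2 / 3) (a := 0) (b := -1) (c := 0) (by norm_num)
  have hadd := log_eq_of_eq_zpow (y := 1 + 2 / 3) (a := 0) (b := -1) (c := 1) (by norm_num)
  have hcorr : corr (2 / 3) = 5 / 4 := by norm_num [corr]
  have hlog := log_eq_of_eq_zpow (y := 5 / 4) (a := -2) (b := 0) (c := 1) (by norm_num)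
  push_cast at hu hsub hadd hlog
  refine secondMomentRate_le_of_approx (u := 2 / 3) (E := -0.005950) (D := -2.302585) (by norm_num)
    ⟨by linarith [hx.1], by linarith [hx.2]⟩ ?_ ?_ ?_
  · rw [secondMomentRate, overlapEntropy, negMulLog, negMulLog, negMulLog, hcorr, hu, hsub, hadd,
      hlog]
    linarith [log_two_lt_d9, log_two_gt_d9, log_three_lt_d9, log_three_gt_d9, log_five_lt_d9,
      log_five_gt_d9]
  · rw [entropySlope, hu, hsub, hadd, abs_le]
    constructor <;> linarith [log_two_lt_d9, log_two_gt_d9, log_three_lt_d9, log_three_gt_d9,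
      log_five_lt_d9, log_five_gt_d9]
  · have hprod := mul_nonneg (sub_nonneg.2 hx.1) (sub_nonneg.2 hx.2)
    rw [hcorr, corr]
    nlinarith [hx.1, hx.2, mul_nonneg hprod (sub_nonneg.2 hx.1)]

lemma secondMomentRate_le_near_four_fifths {x : ℝ} (hx : x ∈ Set.Icc 0.74 1) :
    secondMomentRate (41 / 25) x ≤ -(1 / 1000) := by
  have hu := log_eq_of_eq_zpow (y := 4 / 5) (a := 2) (b := 0) (c := -1) (by norm_num)
  have hsub := log_eq_of_eq_zpow (y := 1 - 4 / 5) (a := 0) (b := 0) (c := -1) (by norm_num)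
  have hadd := log_eq_of_eq_zpow (y := 1 + 4 / 5) (a := 0) (b := 2) (c := -1) (by norm_num)
  have hcorr : corr (4 / 5) = 1539 / 1000 := by norm_num [corr]
  have hlog : log (1539 / 1000) ≤ log 3 - log 2 + 13 / 500 := by
    rw [← log_div (by norm_num) (by norm_num), show (1539 / 1000 : ℝ) = 3 / 2 * (513 / 500) by
      norm_num, log_mul (by norm_num) (by norm_num)]
    linarith [log_le_sub_one_of_pos (show (0 : ℝ) < 513 / 500 by norm_num)]
  push_cast at hu hsub hadd
  refine secondMomentRate_le_of_approx (u := 4 / 5) (E := -0.051370) (D := -3.583519) (by norm_num)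
    ⟨by linarith [hx.1], by linarith [hx.2]⟩ ?_ ?_ ?_
  · rw [secondMomentRate, overlapEntropy, negMulLog, negMulLog, negMulLog, hcorr, hu, hsub, hadd]
    linarith [log_two_lt_d9, log_two_gt_d9, log_three_lt_d9, log_three_gt_d9, log_five_lt_d9,
      log_five_gt_d9]
  · rw [entropySlope, hu, hsub, hadd, abs_le]
    constructor <;> linarith [log_two_lt_d9, log_two_gt_d9, log_three_lt_d9, log_three_gt_d9,
      log_five_lt_d9, log_five_gt_d9]
  · have hprod := mul_nonneg (sub_nonneg.2 hx.1) (sub_nonneg.2 hx.2)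
    rw [hcorr, corr]
    nlinarith [hx.1, hx.2, mul_nonneg hprod (sub_nonneg.2 hx.1)]

/-- At `41 / 75` clauses per variable the rate has a second local maximum on `[1/2, 1]`, which comes
within `0.004` of zero; there one tangent is not enough. -/
lemma secondMomentRate_le {x : ℝ} (hx : x ∈ Set.Icc 0 1) :
    secondMomentRate (41 / 25) x ≤ -(1 / 1000 * (x - 1 / 3) ^ 2) := by
  rcases le_total x (1 / 2) with h | hhalf
  · exact secondMomentRate_le_of_le_half ⟨hx.1, h⟩
  suffices secondMomentRate (41 / 25) x ≤ -(1 / 1000) by nlinarith [hx.1, hx.2]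
  rcases le_total x 0.56 with h | h₁
  · exact secondMomentRate_le_near_half ⟨by linarith, h⟩
  rcases le_total x 0.64 with h | h₂
  · exact secondMomentRate_le_near_three_fifths ⟨h₁, h⟩
  rcases le_total x 0.74 with h | h₃
  · exact secondMomentRate_le_near_two_thirds ⟨h₂, h⟩
  · exact secondMomentRate_le_near_four_fifths ⟨h₃, hx.2⟩

end Rate

/-! ### Stirling bounds and summation over the overlap -/

section Stirling

/-- The exponential part `(n / e) ^ n` of Stirling's formula. -/
noncomputable def stirlingExp (n : ℕ) : ℝ := exp (n * log n - n)

lemma div_exp_one_pow_eq (n : ℕ) : ((n : ℝ) / exp 1) ^ n = stirlingExp n := by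
  rcases n.eq_zero_or_pos with rfl | hn
  · simp [stirlingExp]
  · rw [stirlingExp, div_pow, ← exp_nat_mul, mul_one, exp_sub, mul_comm (n : ℝ), exp_mul,
      exp_log (by positivity), rpow_natCast]

lemma sqrt_mul_stirlingExp_le_factorial (n : ℕ) : √(n + 1) * stirlingExp n ≤ n.factorial := by
  rcases n.eq_zero_or_pos with rfl | hn
  · simp [stirlingExp]
  · have hn' : (1 : ℝ) ≤ n := by exact_mod_cast hn
    rw [← div_exp_one_pow_eq]
    refine le_trans ?_ (Stirling.le_factorial_stirling n)
    gcongr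
    nlinarith [pi_gt_three]

lemma sqrt_mul_stirlingExp_le_factorial_of_le {k n : ℕ} (hkn : k ≤ n) :
    √k * stirlingExp n ≤ n.factorial := by
  refine le_trans ?_ (sqrt_mul_stirlingExp_le_factorial n)
  have : (k : ℝ) ≤ n + 1 := by exact_mod_cast hkn.trans n.le_succ
  exact mul_le_mul_of_nonneg_right (sqrt_le_sqrt this) (exp_pos _).le

lemma factorial_le_mul_stirlingExp {n : ℕ} (hn : n ≠ 0) :
    n.factorial ≤ exp 1 * √n * stirlingExp n := by
  obtain ⟨j, rfl⟩ := Nat.exists_eq_succ_of_ne_zero hn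
  have h := Stirling.stirlingSeq'_antitone j.zero_le
  simp only [Function.comp, Nat.succ_eq_add_one, zero_add, Stirling.stirlingSeq_one] at h
  rw [Stirling.stirlingSeq, div_le_iff₀ (by positivity)] at h
  rw [← div_exp_one_pow_eq]
  refine h.trans_eq ?_
  rw [sqrt_mul (by norm_num)]
  field_simp

lemma overlapProb_add_eq (a b d : ℕ) :
    overlapProb (a + 2 * b + d) (a + b) a =
      ((a + b).factorial * (b + d).factorial : ℝ) ^ 2 /
        (a.factorial * b.factorial ^ 2 * d.factorial * (a + 2 * b + d).factorial) := by
  have hsub : a + 2 * b + d - (a + b) = b + d := by omega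
  rw [overlapProb, hsub, Nat.add_sub_cancel_left, Nat.cast_add_choose,
    Nat.cast_add_choose, Nat.cast_choose ℝ (show a + b ≤ a + 2 * b + d by omega), hsub]
  field_simp

lemma stirlingExp_quotient_eq {k A : ℕ} (hk : 0 < k) (hA : A ≤ k) :
    (stirlingExp k * stirlingExp (2 * k)) ^ 2 /
        (stirlingExp A * stirlingExp (k - A) ^ 2 * stirlingExp (k + A) * stirlingExp (3 * k)) =
      exp (k * overlapEntropy (A / k)) := by
  have hk₀ : (k : ℝ) ≠ 0 := by positivity
  have hlog (n : ℕ) : (n : ℝ) * log n = n * log k - k * negMulLog (n / k) := by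
    conv_lhs => rw [← neg_neg ((n : ℝ) * log n), ← neg_mul, ← negMulLog,
      ← mul_div_cancel₀ (n : ℝ) hk₀, negMulLog_mul]
    rw [negMulLog]
    field_simp
    ring
  simp only [stirlingExp, ← exp_nat_mul, ← exp_add, ← exp_sub]
  congr 1
  rw [hlog A, hlog (k - A), hlog (k + A), hlog (2 * k), hlog (3 * k), overlapEntropy]
  have htwo : ((2 * k : ℕ) : ℝ) / k = 2 := by push_cast; field_simp
  have hthree : ((3 * k : ℕ) : ℝ) / k = 3 := by push_cast; field_simp
  have hadd : ((k + A : ℕ) : ℝ) / k = 1 + A / k := by push_cast; field_simp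
  have hsub : ((k - A : ℕ) : ℝ) / k = 1 - A / k := by rw [Nat.cast_sub hA]; field_simp
  rw [htwo, hthree, hadd, hsub, show negMulLog 2 = -2 * log 2 from rfl,
    show negMulLog 3 = -3 * log 3 from rfl]
  push_cast [Nat.cast_sub hA]
  ring

lemma overlapProb_le {k A : ℕ} (hk : 0 < k) (hA : A ≤ k) :
    overlapProb (3 * k) k A ≤ 2 * exp 1 ^ 4 * (k / (√(A + 1) * (k - A + 1))) *
      exp (k * overlapEntropy (A / k)) := by
  have hpos (n : ℕ) : 0 < stirlingExp n := exp_pos _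
  have hfact := overlapProb_add_eq A (k - A) (k + A)
  rw [show A + 2 * (k - A) + (k + A) = 3 * k by omega, show A + (k - A) = k by omega,
    show k - A + (k + A) = 2 * k by omega] at hfact
  have hk₁ := factorial_le_mul_stirlingExp hk.ne'
  have hk₂ := factorial_le_mul_stirlingExp (n := 2 * k) (by omega)
  have hA₁ := sqrt_mul_stirlingExp_le_factorial A
  have hA₂ := sqrt_mul_stirlingExp_le_factorial (k - A)
  have hsum := sqrt_mul_stirlingExp_le_factorial_of_le (k.le_add_right A)
  have htot := sqrt_mul_stirlingExp_le_factorial_of_le (show k ≤ 3 * k by omega)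
  have hpk := hpos k
  have hpA := hpos A
  have hpB := hpos (k - A)
  have hpS := hpos (k + A)
  have hpT := hpos (3 * k)
  calc overlapProb (3 * k) k A
      ≤ ((exp 1 * √k * stirlingExp k) * (exp 1 * √(2 * k : ℕ) * stirlingExp (2 * k))) ^ 2 /
        ((√(A + 1) * stirlingExp A) * (√((k - A : ℕ) + 1) * stirlingExp (k - A)) ^ 2 *
          (√k * stirlingExp (k + A)) * (√k * stirlingExp (3 * k))) := by
        rw [hfact]
        gcongr
    _ = 2 * exp 1 ^ 4 * (k / (√(A + 1) * (k - A + 1))) *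
        ((stirlingExp k * stirlingExp (2 * k)) ^ 2 / (stirlingExp A * stirlingExp (k - A) ^ 2 *
          stirlingExp (k + A) * stirlingExp (3 * k))) := by
        have hsq : √(k : ℝ) ^ 2 = k := sq_sqrt k.cast_nonneg
        have hsq₂ : √((2 * k : ℕ) : ℝ) ^ 2 = 2 * k := by
          rw [sq_sqrt (Nat.cast_nonneg _), Nat.cast_mul, Nat.cast_ofNat]
        have hsqB : √(((k - A : ℕ) : ℝ) + 1) ^ 2 = k - A + 1 := by
          rw [sq_sqrt (by positivity), Nat.cast_sub hA]
        have hB : (0 : ℝ) < k - A + 1 := by rw [← Nat.cast_sub hA]; positivity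
        simp only [mul_pow, hsqB, hsq, hsq₂]
        field_simp
        rw [hsq]
        ring
    _ = _ := by rw [stirlingExp_quotient_eq hk hA]

end Stirling

section Summation

lemma one_add_pow_mul_exp_neg_le {ε z : ℝ} (hε : 0 < ε) (hz : 0 ≤ z) (n : ℕ) :
    (1 + z) ^ n * exp (-(ε * z)) ≤ n.factorial * exp 1 * (1 + 1 / ε) ^ n := by
  have hlin : 1 + z ≤ (1 + 1 / ε) * (1 + ε * z) := by
    have : (1 + 1 / ε) * (1 + ε * z) = 1 + z + (ε * z + 1 / ε) := by field_simp; ring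
    rw [this, le_add_iff_nonneg_right]
    positivity
  have hpow : (1 + ε * z) ^ n ≤ n.factorial * exp (1 + ε * z) := by
    have := pow_div_factorial_le_exp (1 + ε * z) (by positivity) n
    rwa [div_le_iff₀' (by positivity)] at this
  calc (1 + z) ^ n * exp (-(ε * z))
      ≤ ((1 + 1 / ε) * (1 + ε * z)) ^ n * exp (-(ε * z)) := by gcongr
    _ ≤ (1 + 1 / ε) ^ n * (n.factorial * exp (1 + ε * z)) * exp (-(ε * z)) := by
        rw [mul_pow]
        gcongr
    _ = n.factorial * exp 1 * (1 + 1 / ε) ^ n := by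
        rw [exp_add, exp_neg]
        field_simp

/-- Near `a = k / 3` both sides are of order `k ^ (3 / 2)`; elsewhere `(a - k / 3) ^ 2 / k` is at
least of order `k`. -/
lemma mul_sqrt_le_one_add_sq_mul {k a : ℝ} (hk : 1 ≤ k) (ha : a ∈ Set.Icc 0 k) :
    k * √k ≤ 1296 * (1 + (a - k / 3) ^ 2 / k) ^ 2 * (√(a + 1) * (k - a + 1)) := by
  have hk₀ : 0 < k := one_pos.trans_le hk
  obtain ⟨ha₀, hak⟩ := ha
  set z := (a - k / 3) ^ 2 / k
  have hz₀ : 0 ≤ z := by positivity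
  rcases le_or_gt |a - k / 3| (k / 6) with hnear | hfar
  · obtain ⟨hlo, hhi⟩ := abs_le.1 hnear
    have hsqrt : √k / 3 ≤ √(a + 1) := by
      refine le_sqrt_of_sq_le ?_
      rw [div_pow, sq_sqrt hk₀.le]
      linarith
    have hhalf : k / 2 ≤ k - a + 1 := by linarith
    calc k * √k = 6 * 1 ^ 2 * (√k / 3 * (k / 2)) := by ring
      _ ≤ 1296 * (1 + z) ^ 2 * (√(a + 1) * (k - a + 1)) := by
          gcongr <;> linarith
  · have hkz : k ≤ 36 * (1 + z) := by
      have hsq : k / 36 * k ≤ (a - k / 3) ^ 2 := by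
        rw [← sq_abs]
        nlinarith
      have := (le_div_iff₀ hk₀).2 hsq
      linarith
    have hsqrt : √k ≤ k := sqrt_le_self_iff.2 (Or.inr hk)
    calc k * √k ≤ 36 * (1 + z) * (36 * (1 + z)) := by gcongr; exact hsqrt.trans hkz
      _ = 1296 * (1 + z) ^ 2 * (1 * 1) := by ring
      _ ≤ 1296 * (1 + z) ^ 2 * (√(a + 1) * (k - a + 1)) := by
          gcongr
          · exact one_le_sqrt.2 (by linarith)
          · linarith

lemma div_sqrt_mul_exp_le_cauchy {ε k a : ℝ} (hε : 0 < ε) (hk : 1 ≤ k) (ha : a ∈ Set.Icc 0 k) :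
    k / (√(a + 1) * (k - a + 1)) * exp (-(ε * ((a - k / 3) ^ 2 / k))) ≤
      1296 * (6 * exp 1 * (1 + 1 / ε) ^ 3) * (√k / (√k ^ 2 + (a - k / 3) ^ 2)) := by
  have hk₀ : 0 < k := one_pos.trans_le hk
  have hden : 0 < √(a + 1) * (k - a + 1) :=
    mul_pos (sqrt_pos.2 (by linarith [ha.1])) (by linarith [ha.2])
  have hsqrt : 0 < √k := sqrt_pos.2 hk₀
  have hprefactor := mul_sqrt_le_one_add_sq_mul hk ha
  set z := (a - k / 3) ^ 2 / k with hz
  have hz₀ : 0 ≤ z := by positivity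
  have hexp := one_add_pow_mul_exp_neg_le hε hz₀ 3
  rw [show ((Nat.factorial 3 : ℕ) : ℝ) = 6 by norm_num [Nat.factorial]] at hexp
  have hcauchy : √k / (√k ^ 2 + (a - k / 3) ^ 2) = 1 / (√k * (1 + z)) := by
    rw [hz, sq_sqrt hk₀.le]
    field_simp
    rw [sq_sqrt hk₀.le]
  calc k / (√(a + 1) * (k - a + 1)) * exp (-(ε * z))
      ≤ 1296 * (1 + z) ^ 2 / √k * exp (-(ε * z)) := by
        refine mul_le_mul_of_nonneg_right ?_ (exp_pos _).le
        rwa [div_le_div_iff₀ hden hsqrt]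
    _ = 1296 * ((1 + z) ^ 3 * exp (-(ε * z))) * (1 / (√k * (1 + z))) := by field_simp
    _ ≤ 1296 * (6 * exp 1 * (1 + 1 / ε) ^ 3) * (1 / (√k * (1 + z))) := by
        refine mul_le_mul_of_nonneg_right ?_ (by positivity)
        exact mul_le_mul_of_nonneg_left hexp (by norm_num)
    _ = _ := by rw [hcauchy]

lemma div_sq_add_sq_le_arctan_sub {s : ℝ} (hs : 1 ≤ s) (x : ℝ) :
    s / (s ^ 2 + x ^ 2) ≤ 4 * (arctan ((x + 1) / s) - arctan (x / s)) := by
  have hs₀ : 0 < s := one_pos.trans_le hs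
  have hlt : x / s < (x + 1) / s := by
    gcongr
    linarith
  obtain ⟨y, ⟨hy₁, hy₂⟩, hy⟩ := exists_deriv_eq_slope arctan hlt continuous_arctan.continuousOn
    differentiable_arctan.differentiableOn
  rw [Real.deriv_arctan, ← sub_div, add_sub_cancel_left, eq_div_iff (by positivity)] at hy
  rw [div_lt_iff₀ hs₀] at hy₁
  rw [lt_div_iff₀ hs₀] at hy₂
  have hsq : (y * s) ^ 2 ≤ 2 * x ^ 2 + 2 := by nlinarith [sq_nonneg (y * s - x - x)]
  calc s / (s ^ 2 + x ^ 2) ≤ s / ((s ^ 2 + (y * s) ^ 2) / 4) := by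
        gcongr
        nlinarith [sq_nonneg x]
    _ = 4 * (1 / (1 + y ^ 2) * (1 / s)) := by field_simp
    _ = 4 * (arctan ((x + 1) / s) - arctan (x / s)) := by rw [hy]

lemma sum_cauchy_le {s : ℝ} (hs : 1 ≤ s) (t : ℝ) (N : ℕ) :
    ∑ A ∈ range N, s / (s ^ 2 + (A - t) ^ 2) ≤ 4 * π := by
  calc ∑ A ∈ range N, s / (s ^ 2 + (A - t) ^ 2)
      ≤ ∑ A ∈ range N, 4 * (arctan (((A + 1 : ℕ) - t) / s) - arctan ((A - t) / s)) := by
        refine sum_le_sum fun A _ => ?_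
        have := div_sq_add_sq_le_arctan_sub hs (A - t)
        rwa [show (A : ℝ) - t + 1 = (A + 1 : ℕ) - t by push_cast; ring] at this
    _ = 4 * (arctan ((N - t) / s) - arctan (((0 : ℕ) - t) / s)) := by
        rw [← mul_sum, sum_range_sub fun A : ℕ => arctan ((A - t) / s)]
    _ ≤ 4 * π := by
        linarith [arctan_lt_pi_div_two ((N - t) / s),
          neg_pi_div_two_lt_arctan (((0 : ℕ) - t) / s)]

end Summation

section ClauseCorrelation

lemma cast_choose_three (n : ℕ) : (n.choose 3 : ℝ) = n * (n - 1) * (n - 2) / 6 := by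
  induction n with
  | zero => simp
  | succ n ih =>
    rw [Nat.choose_succ_succ' n 2, Nat.cast_add, ih, Nat.cast_choose_two]
    push_cast
    ring

lemma pairCount_three_mul_le {k A : ℕ} (hk : 0 < k) (hA : A ≤ k) :
    pairCount (3 * k) k A ≤ 8 / 9 * k ^ 3 * corr (A / k) := by
  have hcorr : 8 / 9 * (k : ℝ) ^ 3 * corr (A / k) =
      A * (k + A) ^ 2 / 2 + (k - A) ^ 2 * (k + A) := by
    rw [corr]
    field_simp
    ring
  rw [hcorr, pairCount, show 3 * k - (2 * k - A) = k + A by omega]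
  push_cast [Nat.cast_sub hA, Nat.cast_choose_two]
  have : (0 : ℝ) ≤ A * (k + A) := by positivity
  linarith

lemma clauseCorr_three_mul_le {k A : ℕ} (hk : 0 < k) (hA : A ≤ k) :
    clauseCorr (3 * k) k A ≤ corr (A / k) * exp (2 / k) := by
  have hk₁ : (1 : ℝ) ≤ k := by exact_mod_cast hk
  have hcorr := corr_pos (x := A / k) (by positivity)
  have hchoose : ((3 * k).choose 3 : ℝ) ≤ 9 / 2 * k ^ 3 := by
    rw [cast_choose_three]
    push_cast
    nlinarith
  have hmean : (k * (3 * k - k).choose 2 : ℝ) = k ^ 2 * (2 * k - 1) := by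
    rw [show 3 * k - k = 2 * k by omega, Nat.cast_choose_two]
    push_cast
    ring
  have hy : (k : ℝ) ≤ 2 * k - 1 := by linarith
  have hy₀ : (0 : ℝ) < 2 * k - 1 := by linarith
  rw [clauseCorr, hmean]
  calc (pairCount (3 * k) k A : ℝ) * (3 * k).choose 3 / (k ^ 2 * (2 * k - 1)) ^ 2
      ≤ (8 / 9 * k ^ 3 * corr (A / k)) * (9 / 2 * k ^ 3) / (k ^ 2 * (2 * k - 1)) ^ 2 := by
        gcongr
        exact pairCount_three_mul_le hk hA
    _ = corr (A / k) * (1 / (2 * k - 1) + 1) ^ 2 := by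
        rw [div_add_one hy₀.ne', add_sub_cancel, div_pow]
        field_simp
        ring
    _ ≤ corr (A / k) * exp (1 / k) ^ 2 := by
        gcongr
        exact (add_le_add_left (one_div_le_one_div_of_le (by positivity) hy) 1).trans
          (add_one_le_exp _)
    _ = corr (A / k) * exp (2 / k) := by
        rw [← exp_nat_mul]
        ring_nf

lemma exp_div_pow_le {b c k : ℝ} {m : ℕ} (hb : 0 ≤ b) (hk : 0 < k) (hm : m ≤ c * k) :
    exp (b / k) ^ m ≤ exp (b * c) := by
  rw [← exp_nat_mul, exp_le_exp]
  calc m * (b / k) ≤ c * k * (b / k) := by gcongr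
    _ = b * c := by field_simp

lemma clauseCorr_three_mul_pow_le {c : ℝ} {k m A : ℕ} (hk : 0 < k) (hm : m ≤ c * k)
    (hA : A ≤ k) :
    clauseCorr (3 * k) k A ^ m ≤ exp (2 * c) * exp (k * (c * log (corr (A / k)))) := by
  have hcorr := one_le_corr (x := A / k) (by positivity)
  have hpow : corr (A / k) ^ m ≤ exp (k * (c * log (corr (A / k)))) := by
    rw [← rpow_natCast, rpow_def_of_pos (one_pos.trans_le hcorr), exp_le_exp]
    linarith [mul_le_mul_of_nonneg_left hm (log_nonneg hcorr)]
  have hnonneg : 0 ≤ clauseCorr (3 * k) k A := by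
    rw [clauseCorr]
    positivity
  calc clauseCorr (3 * k) k A ^ m ≤ (corr (A / k) * exp (2 / k)) ^ m :=
        pow_le_pow_left₀ hnonneg (clauseCorr_three_mul_le hk hA) m
    _ = exp (2 / k) ^ m * corr (A / k) ^ m := by rw [mul_pow, mul_comm]
    _ ≤ exp (2 * c) * exp (k * (c * log (corr (A / k)))) := by
        gcongr
        exact exp_div_pow_le zero_le_two (by exact_mod_cast hk) hm

end ClauseCorrelation

/-! ### The satisfiability probability -/

section Satisfiability

variable {c ε : ℝ}

lemma overlapProb_mul_clauseCorr_pow_le (hε : 0 < ε)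
    (hrate : ∀ x ∈ Set.Icc 0 1, secondMomentRate c x ≤ -(ε * (x - 1 / 3) ^ 2)) {k m A : ℕ}
    (hk : 0 < k) (hm : m ≤ c * k) (hA : A ≤ k) :
    overlapProb (3 * k) k A * clauseCorr (3 * k) k A ^ m ≤
      2 * exp 1 ^ 4 * exp (2 * c) * (1296 * (6 * exp 1 * (1 + 1 / ε) ^ 3)) *
        (√k / (√k ^ 2 + (A - k / 3 : ℝ) ^ 2)) := by
  have hk₁ : (1 : ℝ) ≤ k := by exact_mod_cast hk
  have hAk : (A : ℝ) ∈ Set.Icc 0 (k : ℝ) := ⟨A.cast_nonneg, by exact_mod_cast hA⟩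
  have hx : (A / k : ℝ) ∈ Set.Icc 0 1 := ⟨by positivity, div_le_one_of_le₀ hAk.2 k.cast_nonneg⟩
  have hprefactor : (0 : ℝ) ≤ k / (√(A + 1) * (k - A + 1)) :=
    div_nonneg k.cast_nonneg (mul_nonneg (sqrt_nonneg _) (by linarith [hAk.2]))
  have hexponent : k * secondMomentRate c (A / k) ≤ -(ε * ((A - k / 3) ^ 2 / k)) := by
    refine (mul_le_mul_of_nonneg_left (hrate _ hx) k.cast_nonneg).trans_eq ?_
    field_simp
  calc overlapProb (3 * k) k A * clauseCorr (3 * k) k A ^ m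
      ≤ (2 * exp 1 ^ 4 * (k / (√(A + 1) * (k - A + 1))) * exp (k * overlapEntropy (A / k))) *
          (exp (2 * c) * exp (k * (c * log (corr (A / k))))) := by
        gcongr
        · rw [clauseCorr]
          positivity
        · exact overlapProb_le hk hA
        · exact clauseCorr_three_mul_pow_le hk hm hA
    _ = 2 * exp 1 ^ 4 * exp (2 * c) *
          (k / (√(A + 1) * (k - A + 1)) * exp (k * secondMomentRate c (A / k))) := by
        rw [secondMomentRate, mul_add (k : ℝ) (overlapEntropy _), exp_add]
        ring
    _ ≤ 2 * exp 1 ^ 4 * exp (2 * c) *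
          (k / (√(A + 1) * (k - A + 1)) * exp (-(ε * ((A - k / 3) ^ 2 / k)))) := by gcongr
    _ ≤ _ := by
        rw [mul_assoc _ (1296 * _)]
        exact mul_le_mul_of_nonneg_left (div_sqrt_mul_exp_le_cauchy hε hk₁ hAk) (by positivity)

lemma exists_pos_le_Psat_three_mul (hε : 0 < ε)
    (hrate : ∀ x ∈ Set.Icc 0 1, secondMomentRate c x ≤ -(ε * (x - 1 / 3) ^ 2)) :
    ∃ δ, 0 < δ ∧ ∀ k m : ℕ, 0 < k → m ≤ c * k → δ ≤ Psat (3 * k) m := by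
  set K := 2 * exp 1 ^ 4 * exp (2 * c) * (1296 * (6 * exp 1 * (1 + 1 / ε) ^ 3))
  refine ⟨1 / (K * (4 * π)), by positivity, fun k m hk hm => ?_⟩
  have hsum : ∑ A ∈ range (k + 1), overlapProb (3 * k) k A * clauseCorr (3 * k) k A ^ m ≤
      K * (4 * π) := by
    refine (sum_le_sum fun A hA => overlapProb_mul_clauseCorr_pow_le hε hrate hk hm
      (Nat.lt_succ_iff.1 (mem_range.1 hA))).trans ?_
    rw [← mul_sum]
    gcongr
    exact sum_cauchy_le (one_le_sqrt.2 (by exact_mod_cast hk)) _ _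
  rw [div_le_iff₀ (by positivity)]
  refine (one_le_Psat_mul_sum (n := 3 * k) hk (by omega) m).trans ?_
  gcongr
  rw [Psat]
  positivity

lemma card_satisfiable_mono {n n' : ℕ} (h : n ≤ n') (m : ℕ) :
    Nat.card {φ : Fin m → EC3Clause n // FormulaSatisfiable φ} ≤
      Nat.card {φ : Fin m → EC3Clause n' // FormulaSatisfiable φ} := by
  let extend (c : EC3Clause n) : EC3Clause n' :=
    ⟨c.1.map (Fin.castLEEmb h), (card_map _).trans c.2⟩
  have hinj : Function.Injective extend := fun c d hcd =>
    Subtype.ext (map_injective _ (congrArg Subtype.val hcd))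
  have hsat (φ : Fin m → EC3Clause n) (hφ : FormulaSatisfiable φ) :
      FormulaSatisfiable (extend ∘ φ) := by
    obtain ⟨σ, hσ⟩ := hφ
    refine ⟨Function.extend (Fin.castLEEmb h) σ fun _ => false, fun i => ?_⟩
    have := hσ i
    rw [ClauseSat] at this ⊢
    rw [Function.comp_apply, filter_map, card_map]
    simpa only [Function.comp_def, (Fin.castLEEmb h).injective.extend_apply] using this
  exact Nat.card_le_card_of_injective (Subtype.map (extend ∘ ·) hsat)
    (Subtype.map_injective hsat (hinj.comp_left))

lemma choose_three_le_exp_mul {n k : ℕ} (hk : 0 < k) (hn : n ∈ Set.Icc (3 * k) (3 * k + 2)) :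
    (n.choose 3 : ℝ) ≤ exp (6 / k) * (3 * k).choose 3 := by
  have hk₁ : (1 : ℝ) ≤ k := by exact_mod_cast hk
  have hlo : 3 * (k : ℝ) ≤ n := by exact_mod_cast hn.1
  have hhi : (n : ℝ) ≤ 3 * k + 2 := by exact_mod_cast hn.2
  have hfactor (i : ℝ) (hi : i ≤ 2) : n - i ≤ exp (2 / k) * (3 * k - i) := by
    calc n - i ≤ 2 / k * (3 * k - i) + (3 * k - i) := by
          rw [div_mul_eq_mul_div]
          have : 2 ≤ 2 * (3 * k - i) / k := by
            rw [le_div_iff₀ (by positivity)]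
            linarith
          linarith
      _ = (2 / k + 1) * (3 * k - i) := by ring
      _ ≤ exp (2 / k) * (3 * k - i) :=
          mul_le_mul_of_nonneg_right (add_one_le_exp _) (by linarith)
  have h₀ := hfactor 0 (by norm_num)
  have h₁ := hfactor 1 (by norm_num)
  have h₂ := hfactor 2 (by norm_num)
  rw [sub_zero, sub_zero] at h₀
  rw [cast_choose_three, cast_choose_three, Nat.cast_mul, Nat.cast_ofNat]
  calc (n : ℝ) * (n - 1) * (n - 2) / 6
      ≤ exp (2 / k) * (3 * k) * (exp (2 / k) * (3 * k - 1)) *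
          (exp (2 / k) * (3 * k - 2)) / 6 := by
        have : (0 : ℝ) ≤ n - 1 := by linarith
        have : (0 : ℝ) ≤ n - 2 := by linarith
        have : (0 : ℝ) ≤ 3 * k - 1 := by linarith
        gcongr
    _ = exp (2 / k) ^ 3 * (3 * k * (3 * k - 1) * (3 * k - 2) / 6) := by ring
    _ = exp (6 / k) * (3 * k * (3 * k - 1) * (3 * k - 2) / 6) := by
        rw [← exp_nat_mul]
        ring_nf

/-- All `m` clauses avoid the at most two extra variables with probability bounded below. -/
lemma Psat_three_mul_le {n k m : ℕ} (hk : 0 < k) (hn : n ∈ Set.Icc (3 * k) (3 * k + 2))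
    (hm : m ≤ c * k) : Psat (3 * k) m ≤ exp (6 * c) * Psat n m := by
  have hk₀ : (0 : ℝ) < k := by exact_mod_cast hk
  have hpos : (0 : ℝ) < (3 * k).choose 3 := by exact_mod_cast Nat.choose_pos (by omega)
  have hpos' : (0 : ℝ) < n.choose 3 := by exact_mod_cast Nat.choose_pos (hn.1.trans' (by omega))
  have hpow : (n.choose 3 : ℝ) ^ m ≤ exp (6 * c) * (3 * k).choose 3 ^ m := by
    calc (n.choose 3 : ℝ) ^ m ≤ (exp (6 / k) * (3 * k).choose 3) ^ m := by
          gcongr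
          exact choose_three_le_exp_mul hk hn
      _ = exp (6 / k) ^ m * (3 * k).choose 3 ^ m := mul_pow _ _ _
      _ ≤ exp (6 * c) * (3 * k).choose 3 ^ m := by
          gcongr
          exact exp_div_pow_le (by norm_num) hk₀ hm
  have hcard : (Nat.card {φ : Fin m → EC3Clause (3 * k) // FormulaSatisfiable φ} : ℝ) ≤
      Nat.card {φ : Fin m → EC3Clause n // FormulaSatisfiable φ} := by
    exact_mod_cast card_satisfiable_mono hn.1 m
  simp only [Psat, Nat.card_fun, Nat.card_eq_fintype_card (α := EC3Clause _), card_clause,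
    Nat.card_fin, Nat.cast_pow]
  rw [← mul_div_assoc, div_le_div_iff₀ (by positivity) (by positivity)]
  calc _ ≤ (Nat.card {φ : Fin m → EC3Clause n // FormulaSatisfiable φ} : ℝ) *
        (exp (6 * c) * (3 * k).choose 3 ^ m) := by gcongr
    _ = _ := by ring

lemma exists_pos_le_Psat (hε : 0 < ε)
    (hrate : ∀ x ∈ Set.Icc 0 1, secondMomentRate c x ≤ -(ε * (x - 1 / 3) ^ 2)) :
    ∃ δ, 0 < δ ∧ ∀ n m : ℕ, 3 ≤ n → m ≤ c * (n / 3 : ℕ) → δ ≤ Psat n m := by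
  obtain ⟨δ, hδ, hPsat⟩ := exists_pos_le_Psat_three_mul hε hrate
  refine ⟨δ / exp (6 * c), by positivity, fun n m hn hm => ?_⟩
  have hk : 0 < n / 3 := by omega
  rw [div_le_iff₀' (exp_pos _)]
  exact (hPsat _ m hk hm).trans (Psat_three_mul_le hk ⟨by omega, by omega⟩ hm)

lemma eventually_floor_mul_le {r : ℝ} (hc : 0 < c) (hr : r < c / 3) :
    ∀ᶠ n : ℕ in atTop, (⌊r * n⌋₊ : ℝ) ≤ c * (n / 3 : ℕ) := by
  have hgap : 0 < c / 3 - r := sub_pos.2 hr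
  filter_upwards [eventually_ge_atTop ⌈c / (c / 3 - r)⌉₊] with n hn
  have hn' : c / (c / 3 - r) ≤ n := Nat.ceil_le.1 hn
  rw [div_le_iff₀ hgap] at hn'
  have hdiv : (n : ℝ) ≤ 3 * (n / 3 : ℕ) + 2 := by exact_mod_cast (by omega : n ≤ 3 * (n / 3) + 2)
  rcases le_or_gt 0 (r * n) with h | h
  · nlinarith [Nat.floor_le h]
  · rw [Nat.floor_of_nonpos h.le, Nat.cast_zero]
    positivity

end Satisfiability

end EC3

/-- If `r ≤ 0.546`, the probability that a random EC3 formula on `n` variables with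
`⌊r n⌋` clauses is satisfiable is bounded away from 0 for large `n`. -/
theorem ec3_sat_positive_prob (r : ℝ) (hr : r ≤ 0.546) :
    ∃ δ : ℝ, 0 < δ ∧ ∀ᶠ n : ℕ in atTop, δ ≤ Psat n ⌊r * (n : ℝ)⌋₊ := by
  obtain ⟨δ, hδ, hPsat⟩ := EC3.exists_pos_le_Psat (c := 41 / 25) (ε := 1 / 1000) (by norm_num)
    fun x hx => EC3.secondMomentRate_le hx
  have hfloor := EC3.eventually_floor_mul_le (c := 41 / 25) (r := r) (by norm_num)
    (hr.trans_lt (by norm_num))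
  refine ⟨δ, hδ, ?_⟩
  filter_upwards [eventually_ge_atTop 3, hfloor] with n hn hm
  exact hPsat n _ hn hm
end

section
/- Suppose there exists a (uniform) satisfiability threshold r* for random EC3 formulas, i.e., a constant r* > 0 such that for every fixed r, a random EC3 formula on n variables with ⌊rn⌋ clauses is satisfiable with probability tending to 1 as n → ∞ whenever r < r*, and with probability tending to 0 whenever r > r*. Then r* ≥ 0.546. -/
/-!
A threshold below `0.546` would make the satisfiability probability at density `0.546` tend to `0`,
so it suffices to bound that probability away from `0`. The bound comes from an assignment procedure
that never backtracks, analysed by a potential function.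

Assigning variables one at a time turns clauses into constraints of a few kinds: exactly-one
constraints on at most three variables and all-false constraints on at most two. Given the kinds,
the constraints stay independent and uniform on the remaining variables. So giving a value to a
variable of some constraint bounds the satisfiability probability for `n + 1` variables below by an
average of that for `n` variables, in which each other constraint of size `j` contains the variable
with probability `j / (n + 1)`, independently.

The procedure first exposes variables whose value is forced, and otherwise sets to true a variable
of an exactly-one constraint, on two variables if there is one. With a fraction `s` of the `N`
variables left, there are about `0.546 s ^ 3 N` constraints on three variables, and at most about
`s D(s) N` occurrences of variables outside them, where `D` is `shortDensity`. A variable set to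
true forces about `6 * 0.546 s ^ 2 + D(s)` others to be false, and one set to false forces about
`D(s)` others to be true. So forced variables form a two-type branching process; it is subcritical
because the product of these two numbers is less than `1`, for which the density `0.546` is just
small enough. Hence each round of forced steps is short, and a contradiction has probability
`O(1 / N)` per round.

The potential makes this rigorous without concentration inequalities. Its main term contains an
exponential functional of the forced variables, which contracts in forced steps and so pays for
possible contradictions, and a factor that grows enough to pay for the free steps. Subtracted from
it are three exponential functionals, for the constraints on three variables, for all occurrences,
and for the occurrences outside constraints on three variables. Each is a supermartingale, up to an
exponentially small error, and exceeds `1` as soon as the quantity it controls leaves its range. So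
the potential does not decrease on average. It is nonpositive when few variables are left and at
most `1` when all constraints are satisfied, hence by induction it is a lower bound for the
satisfiability probability; and it is bounded away from `0` for the initial formula.
-/

open Filter Topology

namespace EC3

open Finset
open scoped BigOperators

/-! ### Random constraints and the exposure of one variable -/

/-- The kinds of constraint met while variables are being assigned. `one3`, `one2`, `one1`: exactly
one variable of a 3-, 2-, 1-element set is true; `zero2`, `zero1`: all variables of a 2-, 1-element
set are false; `sat`: the empty, satisfied constraint; `unsat1`, `unsat0`: violated constraints,
with one or no variable left. -/
inductive Kind
  | one3 | one2 | one1 | zero2 | zero1 | sat | unsat1 | unsat0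
  deriving DecidableEq

open Kind

/-- The number of variables in a constraint of a given kind. -/
def Kind.size : Kind → ℕ
  | one3 => 3 | one2 => 2 | one1 => 1 | zero2 => 2 | zero1 => 1 | sat => 0 | unsat1 => 1
  | unsat0 => 0

/-- The kind of what is left of a constraint once one of its variables is given the value `β`.
Constraints without variables are left unchanged. -/
def Kind.hit : Bool → Kind → Kind
  | true, one3 => zero2 | true, one2 => zero1 | true, one1 => sat
  | true, zero2 => unsat1 | true, zero1 => unsat0
  | false, one3 => one2 | false, one2 => one1 | false, one1 => unsat0
  | false, zero2 => zero1 | false, zero1 => sat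
  | _, sat => sat | _, unsat1 => unsat0 | _, unsat0 => unsat0

/-- The assignment `σ` satisfies the constraint of kind `k` on the variable set `S`. -/
def Kind.Holds {V : Type*} (k : Kind) (S : Finset V) (σ : V → Bool) : Prop :=
  match k with
  | one3 | one2 | one1 => (S.filter fun v => σ v = true).card = 1
  | zero2 | zero1 | sat => (S.filter fun v => σ v = true).card = 0
  | unsat1 | unsat0 => False

open Classical in
/-- The probability that independent uniformly random constraints on `Fin n`, of the kinds in the
list, are simultaneously satisfied by some assignment in `A`. -/
noncomputable def satProb (n : ℕ) : List Kind → Set (Fin n → Bool) → ℝ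
  | [], A => if A.Nonempty then 1 else 0
  | k :: κ, A => 𝔼 S ∈ powersetCard k.size univ, satProb n κ (A ∩ {σ | k.Holds S σ})

/-- The expectation of a function of the list of kinds after one variable is given the value `β`:
independently, each constraint contains that variable with probability `q` times its size, and is
then replaced by `hit β`. -/
noncomputable def exposeMean (β : Bool) (q : ℝ) : List Kind → (List Kind → ℝ) →ₗ[ℝ] ℝ
  | [] => LinearMap.proj []
  | k :: κ => (1 - k.size * q) • exposeMean β q κ ∘ₗ LinearMap.funLeft ℝ ℝ (List.cons k) +
      (k.size * q) • exposeMean β q κ ∘ₗ LinearMap.funLeft ℝ ℝ (List.cons (hit β k))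

lemma Kind.size_le_three (k : Kind) : k.size ≤ 3 := by
  cases k <;> decide

lemma Kind.size_hit (β : Bool) (k : Kind) : (hit β k).size = k.size - 1 := by
  cases β <;> cases k <;> rfl

lemma exposeMean_nil (β : Bool) (q : ℝ) (G : List Kind → ℝ) : exposeMean β q [] G = G [] := rfl

lemma exposeMean_cons (β : Bool) (q : ℝ) (k : Kind) (κ : List Kind) (G : List Kind → ℝ) :
    exposeMean β q (k :: κ) G = (1 - k.size * q) * exposeMean β q κ (fun κ' => G (k :: κ')) +
      k.size * q * exposeMean β q κ (fun κ' => G (hit β k :: κ')) := rfl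

section Probability

variable {q : ℝ} (hq : 0 ≤ q) (hq3 : 3 * q ≤ 1)

include hq in
lemma Kind.size_mul_nonneg (k : Kind) : 0 ≤ k.size * q := by positivity

include hq3 in
lemma Kind.one_sub_size_mul_nonneg (k : Kind) : 0 ≤ 1 - k.size * q := by
  cases k <;> simp only [size] <;> push_cast <;> linarith

include hq hq3 in
lemma exposeMean_mono (β : Bool) (κ : List Kind) {G G' : List Kind → ℝ} (h : G ≤ G') :
    exposeMean β q κ G ≤ exposeMean β q κ G' := by
  induction κ generalizing G G' with
  | nil => exact h _
  | cons k κ ih =>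
    rw [exposeMean_cons, exposeMean_cons]
    exact add_le_add
      (mul_le_mul_of_nonneg_left (ih fun _ => h _) (k.one_sub_size_mul_nonneg hq3))
      (mul_le_mul_of_nonneg_left (ih fun _ => h _) (k.size_mul_nonneg hq))

end Probability

lemma exposeMean_expect {ι : Type*} (β : Bool) (q : ℝ) (κ : List Kind) (s : Finset ι)
    (G : ι → List Kind → ℝ) :
    exposeMean β q κ (fun κ' => 𝔼 i ∈ s, G i κ') = 𝔼 i ∈ s, exposeMean β q κ (G i) := by
  rw [show (fun κ' => 𝔼 i ∈ s, G i κ') = 𝔼 i ∈ s, G i from funext fun κ' =>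
    (expect_apply s G κ').symm]
  exact map_expect ((exposeMean β q κ).restrictScalars ℚ≥0) G s

section SubsetsOfFin

variable {n k : ℕ}

lemma zero_notMem_map_succEmb (S : Finset (Fin n)) : (0 : Fin (n + 1)) ∉ S.map (Fin.succEmb n) := by
  simp

lemma sum_powersetCard_fin_succ {M : Type*} [AddCommMonoid M] (f : Finset (Fin (n + 1)) → M) :
    ∑ S ∈ powersetCard (k + 1) univ, f S =
      ∑ S ∈ powersetCard (k + 1) univ, f (S.map (Fin.succEmb n)) +
        ∑ S ∈ powersetCard k univ, f (insert 0 (S.map (Fin.succEmb n))) := by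
  have hinj : ∀ S ∈ powersetCard k (univ.map (Fin.succEmb n)),
      ∀ T ∈ powersetCard k (univ.map (Fin.succEmb n)), insert 0 S = insert 0 T → S = T := by
    rw [powersetCard_map]
    intro S hS T hT hST
    obtain ⟨S, -, rfl⟩ := mem_map.1 hS
    obtain ⟨T, -, rfl⟩ := mem_map.1 hT
    simpa [erase_insert (zero_notMem_map_succEmb _)] using congrArg (fun U => U.erase 0) hST
  have huniv : (univ : Finset (Fin (n + 1))) = insert 0 (univ.map (Fin.succEmb n)) := by
    rw [Fin.univ_succ, cons_eq_insert]; rfl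
  rw [huniv,
    powersetCard_succ_insert (zero_notMem_map_succEmb _), sum_union, sum_image hinj,
    powersetCard_map, powersetCard_map, sum_map, sum_map]
  · rfl
  · rw [Finset.disjoint_left]
    intro S hS hS'
    obtain ⟨T, -, rfl⟩ := mem_image.1 hS'
    exact zero_notMem_map_succEmb _ ((mem_powersetCard.1 hS).1 (mem_insert_self 0 T))

/-- A uniformly random `k`-subset of `Fin (n + 1)` contains `0` with probability `k / (n + 1)`, and
is otherwise uniform. -/
lemma expect_powersetCard_fin_succ (hk : k ≤ n) (f : Finset (Fin (n + 1)) → ℝ) :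
    𝔼 S ∈ powersetCard k univ, f S =
      (1 - k * (1 / ((n : ℝ) + 1))) * 𝔼 S ∈ powersetCard k univ, f (S.map (Fin.succEmb n)) +
      k * (1 / ((n : ℝ) + 1)) *
        𝔼 S ∈ powersetCard (k - 1) univ, f (insert 0 (S.map (Fin.succEmb n))) := by
  rcases k with _ | k
  · simp
  simp only [expect_eq_sum_div_card, card_powersetCard, card_univ, Fintype.card_fin,
    sum_powersetCard_fin_succ, Nat.add_sub_cancel]
  have c1 : (0 : ℝ) < n.choose (k + 1) := mod_cast Nat.choose_pos hk
  have c2 : (0 : ℝ) < n.choose k := mod_cast Nat.choose_pos (by omega : k ≤ n)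
  have c3 : (0 : ℝ) < (n + 1).choose (k + 1) := mod_cast Nat.choose_pos (by omega : k + 1 ≤ n + 1)
  have absorption : ((n + 1).choose (k + 1) : ℝ) * (k + 1) = (n + 1) * n.choose k :=
    mod_cast (Nat.add_one_mul_choose_eq n k).symm
  have pascal : ((n + 1).choose (k + 1) : ℝ) = n.choose k + n.choose (k + 1) :=
    mod_cast Nat.choose_succ_succ n k
  have hmem : ((k + 1 : ℕ) : ℝ) * (1 / ((n : ℝ) + 1)) = n.choose k / (n + 1).choose (k + 1) := by
    rw [mul_one_div, div_eq_div_iff (by positivity) c3.ne']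
    push_cast
    linarith
  have hnotMem : 1 - ((k + 1 : ℕ) : ℝ) * (1 / ((n : ℝ) + 1)) =
      n.choose (k + 1) / (n + 1).choose (k + 1) := by
    rw [hmem, pascal]; field_simp; ring
  rw [hnotMem, hmem]
  field_simp

end SubsetsOfFin

lemma card_filter_map_equiv {V W : Type*} (e : V ↪ W) (S : Finset V) (σ : W → Bool) :
    ((S.map e).filter fun v => σ v = true).card = (S.filter fun v => σ (e v) = true).card := by
  rw [filter_map, card_map]; rfl

lemma Kind.holds_map {V W : Type*} (k : Kind) (e : V ↪ W) (S : Finset V) (σ : W → Bool) :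
    k.Holds (S.map e) σ ↔ k.Holds S (σ ∘ e) := by
  cases k <;> simp only [Holds, card_filter_map_equiv, Function.comp_apply]

lemma Kind.holds_map_succEmb {n : ℕ} (β : Bool) (k : Kind) (S : Finset (Fin n))
    (τ : Fin n → Bool) :
    k.Holds (S.map (Fin.succEmb n)) (Fin.cons β τ : Fin (n + 1) → Bool) ↔ k.Holds S τ :=
  k.holds_map ..

lemma Kind.holds_insert {n : ℕ} (β : Bool) {k : Kind} {S : Finset (Fin n)} (τ : Fin n → Bool)
    (hk : k.size ≠ 0) (hS : S.card = k.size - 1) :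
    k.Holds (insert 0 (S.map (Fin.succEmb n))) (Fin.cons β τ : Fin (n + 1) → Bool) ↔
      (hit β k).Holds S τ := by
  have hcard : ((insert 0 (S.map (Fin.succEmb n))).filter
      fun v => (Fin.cons β τ : Fin (n + 1) → Bool) v = true).card =
      (S.filter fun v => τ v = true).card + if β = true then 1 else 0 := by
    rw [filter_insert, Fin.cons_zero]
    split_ifs
    · rw [card_insert_of_notMem (by simp), card_filter_map_equiv]; rfl
    · exact card_filter_map_equiv ..
  have := card_filter_le S fun v => τ v = true
  cases β <;> cases k <;> simp only [size, hit, Holds, hcard] at * <;> simp at hS <;> simp_all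

lemma satProb_cons {n : ℕ} (k : Kind) (κ : List Kind) (A : Set (Fin n → Bool)) :
    satProb n (k :: κ) A = 𝔼 S ∈ powersetCard k.size univ, satProb n κ (A ∩ {σ | k.Holds S σ}) :=
  rfl

lemma satProb_nonneg {n : ℕ} (κ : List Kind) (A : Set (Fin n → Bool)) : 0 ≤ satProb n κ A := by
  induction κ generalizing A with
  | nil => unfold satProb; split_ifs <;> norm_num
  | cons k κ ih => exact expect_nonneg fun S _ => ih _

lemma satProb_perm {n : ℕ} {κ κ' : List Kind} (h : κ.Perm κ') (A : Set (Fin n → Bool)) :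
    satProb n κ A = satProb n κ' A := by
  induction h generalizing A with
  | nil => rfl
  | cons k _ ih => simp only [satProb_cons, ih]
  | swap k k' κ =>
    simp only [satProb_cons]
    rw [expect_comm]
    simp only [Set.inter_right_comm]
  | trans _ _ ih₁ ih₂ => rw [ih₁, ih₂]

lemma exposeMean_satProb_cons (β : Bool) (q : ℝ) {n : ℕ} (k : Kind) (κ : List Kind)
    (A : Set (Fin n → Bool)) :
    exposeMean β q κ (fun κ' => satProb n (k :: κ') A) =
      𝔼 S ∈ powersetCard k.size univ,
        exposeMean β q κ fun κ' => satProb n κ' (A ∩ {σ | k.Holds S σ}) := by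
  simp only [satProb_cons, exposeMean_expect]

/-- On the left only those assignments count that give variable `0` the value `β`. -/
lemma exposeMean_satProb_le {n : ℕ} (hn : 3 ≤ n) (β : Bool) (κ : List Kind)
    (A : Set (Fin (n + 1) → Bool)) :
    exposeMean β (1 / ((n : ℝ) + 1)) κ (fun κ' =>
      satProb n κ' {τ | Fin.cons (α := fun _ => Bool) β τ ∈ A}) ≤ satProb (n + 1) κ A := by
  have hn' : (3 : ℝ) ≤ n := mod_cast hn
  have hq : 0 ≤ 1 / ((n : ℝ) + 1) := by positivity
  have hq3 : 3 * (1 / ((n : ℝ) + 1)) ≤ 1 := by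
    rw [mul_one_div, div_le_one (by positivity)]; linarith
  induction κ generalizing A with
  | nil =>
    rw [exposeMean_nil, satProb, satProb]
    split_ifs with h h'
    · rfl
    · exact absurd (h.image _) fun h => h' (h.mono (Set.image_preimage_subset _ _))
    · norm_num
    · rfl
  | cons k κ ih =>
    rw [satProb_cons, expect_powersetCard_fin_succ (k.size_le_three.trans hn), exposeMean_cons,
      exposeMean_satProb_cons, exposeMean_satProb_cons, k.size_hit]
    refine add_le_add (mul_le_mul_of_nonneg_left (expect_le_expect fun S _ => ?_)
      (k.one_sub_size_mul_nonneg hq3)) ?_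
    · simpa only [Set.mem_inter_iff, Set.mem_ofPred_eq, Set.ofPred_and, holds_map_succEmb] using
        ih (A ∩ {σ | k.Holds (S.map (Fin.succEmb n)) σ})
    rcases eq_or_ne k.size 0 with hk | hk
    · simp [hk]
    refine mul_le_mul_of_nonneg_left (expect_le_expect fun S hS => ?_) (k.size_mul_nonneg hq)
    simpa only [Set.mem_inter_iff, Set.mem_ofPred_eq, Set.ofPred_and,
      holds_insert β _ hk (mem_powersetCard.1 hS).2] using
      ih (A ∩ {σ | k.Holds (insert 0 (S.map (Fin.succEmb n))) σ})

lemma satProb_preimage_comp {n : ℕ} (e : Equiv.Perm (Fin n)) (κ : List Kind)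
    (A : Set (Fin n → Bool)) : satProb n κ ((· ∘ e) ⁻¹' A) = satProb n κ A := by
  induction κ generalizing A with
  | nil =>
    have hsurj : Function.Surjective fun σ : Fin n → Bool => σ ∘ e :=
      fun σ => ⟨σ ∘ e.symm, by simp [Function.comp_assoc]⟩
    rw [satProb, satProb, hsurj.nonempty_preimage]
  | cons k κ ih =>
    rw [satProb_cons, satProb_cons]
    refine (expect_equiv e.finsetCongr (fun S => by simp [mem_powersetCard]) fun S _ => ?_).symm
    rw [← ih]
    congr 1
    ext σ
    simp [k.holds_map]

lemma exists_perm_map_eq {V : Type*} [Finite V] {S T : Finset V} (h : S.card = T.card) :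
    ∃ e : Equiv.Perm V, S.map e.toEmbedding = T := by
  classical
  refine ⟨(equivOfCardEq h).extendSubtype, eq_of_subset_of_card_le ?_ (by simp [h])⟩
  intro x hx
  obtain ⟨y, hy, rfl⟩ := mem_map.1 hx
  exact Equiv.extendSubtype_mem _ y hy

lemma satProb_holds_eq_of_card_eq {n : ℕ} (k : Kind) (κ : List Kind) {S T : Finset (Fin n)}
    (h : S.card = T.card) : satProb n κ {σ | k.Holds S σ} = satProb n κ {σ | k.Holds T σ} := by
  obtain ⟨e, rfl⟩ := exists_perm_map_eq h
  simpa [Set.preimage, k.holds_map] using (satProb_preimage_comp e κ {σ | k.Holds S σ}).symm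

lemma satProb_cons_univ {n : ℕ} (k : Kind) (κ : List Kind) {T : Finset (Fin n)}
    (hT : T.card = k.size) : satProb n (k :: κ) Set.univ = satProb n κ {σ | k.Holds T σ} := by
  simp only [satProb_cons, Set.univ_inter]
  rw [expect_congr rfl fun S hS => satProb_holds_eq_of_card_eq k κ
    ((mem_powersetCard.1 hS).2.trans hT.symm)]
  exact expect_const ⟨T, mem_powersetCard.2 ⟨subset_univ T, hT⟩⟩ _

/-- Since all variables are alike, a random constraint may be assumed to contain variable `0`;
that variable is then exposed with value `β`. -/
lemma exposeMean_satProb_hit_cons_le {n : ℕ} (hn : 3 ≤ n) (β : Bool) {k : Kind} (hk : k.size ≠ 0)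
    (κ : List Kind) :
    exposeMean β (1 / ((n : ℝ) + 1)) κ (fun κ' => satProb n (hit β k :: κ') Set.univ) ≤
      satProb (n + 1) (k :: κ) Set.univ := by
  simp only [exposeMean_satProb_cons, k.size_hit, Set.univ_inter]
  refine expect_le (powersetCard_nonempty.2 ?_) fun S hS => ?_
  · simpa using (k.size.sub_le 1).trans (k.size_le_three.trans hn)
  have hS' := (mem_powersetCard.1 hS).2
  have hcard : (insert 0 (S.map (Fin.succEmb n))).card = k.size := by
    rw [card_insert_of_notMem (zero_notMem_map_succEmb S), card_map, hS', Nat.sub_one_add_one hk]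
  rw [satProb_cons_univ k κ hcard]
  simpa only [Set.mem_ofPred_eq, holds_insert β _ hk hS'] using
    exposeMean_satProb_le hn β κ {σ | k.Holds (insert 0 (S.map (Fin.succEmb n))) σ}

lemma satProb_univ_eq_one {n : ℕ} {κ : List Kind} (hκ : ∀ k ∈ κ, k = sat) :
    satProb n κ Set.univ = 1 := by
  induction κ with
  | nil => exact if_pos Set.univ_nonempty
  | cons k κ ih =>
    obtain ⟨rfl, hκ'⟩ := List.forall_mem_cons.1 hκ
    simpa [satProb_cons, size, Holds] using ih hκ'

instance (n : ℕ) : Fintype (EC3Clause n) :=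
  inferInstanceAs (Fintype {c : Finset (Fin n) // c.card = 3})

lemma expect_ec3Clause {n : ℕ} (f : Finset (Fin n) → ℝ) :
    𝔼 c : EC3Clause n, f c.1 = 𝔼 S ∈ powersetCard 3 univ, f S :=
  expect_bij (fun c _ => c.1) (fun c _ => by simpa using c.2) (fun _ _ => rfl)
    (fun _ _ _ _ => Subtype.ext) fun S hS => ⟨⟨S, by simpa using hS⟩, mem_univ _, rfl⟩

open Classical in
lemma satProb_replicate_one3 (n m : ℕ) (A : Set (Fin n → Bool)) :
    satProb n (List.replicate m one3) A = 𝔼 φ : Fin m → EC3Clause n,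
      if ∃ σ ∈ A, ∀ i, ClauseSat σ (φ i).1 then (1 : ℝ) else 0 := by
  induction m generalizing A with
  | zero =>
    rw [univ_unique, expect_singleton]
    exact if_congr (by simp [Set.Nonempty]) rfl rfl
  | succ m ih =>
    rw [List.replicate_succ, satProb_cons, size, ← expect_ec3Clause,
      ← Fintype.expect_equiv (Fin.consEquiv fun _ : Fin (m + 1) => EC3Clause n) _ _ fun _ => rfl,
      ← univ_product_univ, expect_product]
    refine expect_congr rfl fun c _ => (ih _).trans (expect_congr rfl fun φ _ => ?_)
    congr 1
    simp [Fin.forall_fin_succ, Holds, ClauseSat, and_assoc]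

lemma satProb_replicate_one3_univ (n m : ℕ) :
    satProb n (List.replicate m one3) Set.univ = Psat n m := by
  classical
  rw [satProb_replicate_one3, Fintype.expect_eq_sum_div_card, Psat, Nat.card_eq_fintype_card,
    Nat.card_eq_fintype_card, Fintype.card_subtype, natCast_card_filter]
  congr 1
  refine sum_congr rfl fun φ _ => ite_congr (propext ?_) (fun _ => rfl) fun _ => rfl
  simp [FormulaSatisfiable]

/-! ### Products of weights over a list of constraints -/

lemma prod_map_le_prod_map_mul_exp_sum {ι : Type*} {w w' c : ι → ℝ} (l : List ι)
    (h0 : ∀ i ∈ l, 0 ≤ w i) (h : ∀ i ∈ l, w i ≤ w' i * Real.exp (c i)) :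
    (l.map w).prod ≤ (l.map w').prod * Real.exp (l.map c).sum := by
  rw [Real.exp_list_sum, List.map_map, ← List.prod_map_mul]
  exact List.prod_map_le_prod_map₀ _ _ h0 h

/-- The union bound. -/
lemma one_sub_sum_le_prod_map {ι : Type*} {w c : ι → ℝ} (l : List ι) (h0 : ∀ i ∈ l, 0 ≤ w i)
    (h1 : ∀ i ∈ l, w i ≤ 1) (h : ∀ i ∈ l, 1 - c i ≤ w i) :
    1 - (l.map c).sum ≤ (l.map w).prod := by
  induction l with
  | nil => simp
  | cons i l ih =>
    simp only [List.forall_mem_cons] at h0 h1 h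
    have hprod : (l.map w).prod ≤ 1 := by
      simpa using List.prod_map_le_prod_map₀ w (fun _ => 1) h0.2 h1.2
    have hsum := ih h0.2 h1.2 h.2
    rw [List.map_cons, List.map_cons, List.sum_cons, List.prod_cons]
    nlinarith [mul_nonneg (sub_nonneg.2 h1.1) (sub_nonneg.2 hprod)]

lemma pow_count_le_prod_map {ι : Type*} [DecidableEq ι] {w : ι → ℝ} (hw : ∀ i, 1 ≤ w i) (a : ι)
    (l : List ι) : w a ^ l.count a ≤ (l.map w).prod := by
  induction l with
  | nil => simp
  | cons i l ih =>
    have hpow : 0 ≤ w a ^ l.count a := pow_nonneg (zero_le_one.trans (hw a)) _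
    rw [List.map_cons, List.prod_cons, List.count_cons]
    rcases eq_or_ne i a with rfl | hi
    · simpa [pow_succ'] using mul_le_mul_of_nonneg_left ih (zero_le_one.trans (hw i))
    · simpa [hi] using ih.trans (le_mul_of_one_le_left (hpow.trans ih) (hw i))

lemma sum_map_ite_eq_mul_count {ι : Type*} [DecidableEq ι] (a : ι) (c : ℝ) (l : List ι) :
    (l.map fun i => if i = a then c else 0).sum = c * l.count a := by
  induction l with
  | nil => simp
  | cons i l ih =>
    rw [List.map_cons, List.sum_cons, ih, List.count_cons]
    by_cases hi : i = a
    · simp [hi]; ring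
    · simp [hi]

lemma one_le_prod_map {ι : Type*} {w : ι → ℝ} (hw : ∀ i, 1 ≤ w i) (l : List ι) :
    1 ≤ (l.map w).prod := by
  simpa using List.prod_map_le_prod_map₀ (s := l) (fun _ => 1) w (fun _ _ => zero_le_one)
    fun i _ => hw i

lemma prod_map_eq_one {ι : Type*} {w : ι → ℝ} {l : List ι} (h : ∀ i ∈ l, w i = 1) :
    (l.map w).prod = 1 :=
  List.prod_eq_one (List.forall_mem_map.2 h)

/-- The expected weight, after the exposure of a variable, of a constraint of kind `k`. -/
noncomputable def drift (β : Bool) (q : ℝ) (w : Kind → ℝ) (k : Kind) : ℝ :=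
  (1 - k.size * q) * w k + k.size * q * w (hit β k)

lemma exposeMean_mul_left (β : Bool) (q : ℝ) (κ : List Kind) (c : ℝ) (G : List Kind → ℝ) :
    exposeMean β q κ (fun κ' => c * G κ') = c * exposeMean β q κ G :=
  (exposeMean β q κ).map_smul c G

lemma exposeMean_prod (β : Bool) (q : ℝ) (w : Kind → ℝ) (κ : List Kind) :
    exposeMean β q κ (fun κ' => (κ'.map w).prod) = (κ.map (drift β q w)).prod := by
  induction κ with
  | nil => rfl
  | cons k κ ih =>
    simp only [exposeMean_cons, List.map_cons, List.prod_cons, exposeMean_mul_left, ih, drift]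
    ring

/-- The indicator of not being violated. -/
def aliveWeight : Kind → ℝ
  | unsat0 | unsat1 => 0 | _ => 1

/-- The number of variables whose value is forced by a constraint. -/
def forcedCount : Kind → ℝ
  | one1 => 1 | zero1 => 1 | zero2 => 2 | _ => 0

/-- The weight counting the constraints of kind `one3`. -/
def one3Weight (a : ℝ) : Kind → ℝ
  | one3 => a | _ => 1

/-- The weight counting the occurrences of variables. -/
def occWeight (y : ℝ) (k : Kind) : ℝ := y ^ k.size

/-- The weight counting the occurrences of variables outside the constraints of kind `one3`. -/
def shortWeight (y : ℝ) (k : Kind) : ℝ := if k = one3 then 1 else y ^ k.size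

/-- The weight counting the forced variables, with `a` for those forced to be true and `b` for those
forced to be false. -/
def forcedWeight (a b : ℝ) : Kind → ℝ
  | one1 => a | zero1 => b | zero2 => b ^ 2 | _ => 1

lemma shortWeight_of_ne_one3 {k : Kind} (hk : k ≠ one3) (y : ℝ) : shortWeight y k = occWeight y k :=
  if_neg hk

lemma hit_ne_one3 (β : Bool) (k : Kind) : hit β k ≠ one3 := by
  cases β <;> cases k <;> decide

lemma drift_one3Weight_le (β : Bool) {q a a' : ℝ} (h : (1 - 3 * q) * (a - 1) ≤ a' - 1) (k : Kind) :
    drift β q (one3Weight a) k ≤ one3Weight a' k := by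
  cases β <;> cases k <;> simp only [drift, one3Weight, size, hit] <;> push_cast <;> linarith

lemma drift_forcedWeight_true_le {q a a' b : ℝ} (hq : 0 ≤ q) (ha : 1 ≤ a) (ha' : a ≤ a')
    (hb : 1 ≤ b) (k : Kind) :
    drift true q (forcedWeight a b) k ≤ forcedWeight a' b k *
      Real.exp ((if k = one3 then 3 * q * (b ^ 2 - 1) else 0) +
        if k = one2 then 2 * q * (b - 1) else 0) := by
  have h1 := Real.add_one_le_exp (3 * q * (b ^ 2 - 1))
  have h2 := Real.add_one_le_exp (2 * q * (b - 1))
  have hb2 : 1 ≤ b ^ 2 := one_le_pow₀ hb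
  cases k <;> simp [drift, forcedWeight, size, hit] <;> nlinarith

lemma drift_forcedWeight_false_le {q a a' b : ℝ} (hq : 0 ≤ q) (ha : 1 ≤ a) (ha' : a ≤ a')
    (hb : 1 ≤ b) (k : Kind) :
    drift false q (forcedWeight a b) k ≤ forcedWeight a' b k *
      Real.exp (if k = one2 then 2 * q * (a - 1) else 0) := by
  have h2 := Real.add_one_le_exp (2 * q * (a - 1))
  have h3 : 0 ≤ q * b * (b - 1) := mul_nonneg (mul_nonneg hq (by linarith)) (by linarith)
  cases k <;> simp [drift, forcedWeight, size, hit] <;> nlinarith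

section Drift

variable {q : ℝ} (hq : 0 ≤ q) (hq3 : 3 * q ≤ 1)

include hq hq3

lemma drift_nonneg (β : Bool) {w : Kind → ℝ} (hw : ∀ k, 0 ≤ w k) (k : Kind) :
    0 ≤ drift β q w k :=
  add_nonneg (mul_nonneg (k.one_sub_size_mul_nonneg hq3) (hw _))
    (mul_nonneg (k.size_mul_nonneg hq) (hw _))

lemma exposeMean_prod_le (β : Bool) {w w' c : Kind → ℝ} (hw : ∀ k, 0 ≤ w k)
    (h : ∀ k, drift β q w k ≤ w' k * Real.exp (c k)) (κ : List Kind) :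
    exposeMean β q κ (fun κ' => (κ'.map w).prod) ≤
      (κ.map w').prod * Real.exp (κ.map c).sum := by
  rw [exposeMean_prod]
  exact prod_map_le_prod_map_mul_exp_sum κ (fun k _ => drift_nonneg hq hq3 β hw k) fun k _ => h k

lemma exposeMean_mul_prod_cons_le (β : Bool) {w w' e : Kind → ℝ} {c c' : ℝ} (hc : 0 ≤ c)
    (hw : ∀ k, 0 ≤ w k) (hw' : ∀ k, 0 ≤ w' k)
    (hd : ∀ k, drift β q w k ≤ w' k * Real.exp (e k)) (κ : List Kind) {k₀ k : Kind}
    (hk : c * w k₀ * Real.exp (κ.map e).sum ≤ c' * w' k) :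
    exposeMean β q κ (fun κ' => c * ((k₀ :: κ').map w).prod) ≤
      c' * ((k :: κ).map w').prod := by
  have hprod : 0 ≤ (κ.map w').prod := List.prod_nonneg (List.forall_mem_map.2 fun k _ => hw' k)
  simp only [List.map_cons, List.prod_cons, ← mul_assoc, exposeMean_mul_left]
  calc c * w k₀ * exposeMean β q κ (fun κ' => (κ'.map w).prod)
      ≤ c * w k₀ * ((κ.map w').prod * Real.exp (κ.map e).sum) :=
        mul_le_mul_of_nonneg_left (exposeMean_prod_le hq hq3 β hw hd κ) (mul_nonneg hc (hw k₀))
    _ = c * w k₀ * Real.exp (κ.map e).sum * (κ.map w').prod := by ring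
    _ ≤ c' * w' k * (κ.map w').prod := mul_le_mul_of_nonneg_right hk hprod

/-- Only constraints that force a variable can become violated. -/
lemma one_sub_le_exposeMean_alive (β : Bool) {κ : List Kind} (hκ : ∀ k ∈ κ, aliveWeight k = 1) :
    1 - q * (κ.map forcedCount).sum ≤
      exposeMean β q κ fun κ' => (κ'.map aliveWeight).prod := by
  rw [exposeMean_prod, ← List.sum_map_mul_left]
  refine one_sub_sum_le_prod_map κ (fun k _ => drift_nonneg hq hq3 β ?_ k) (fun k _ => ?_)
    fun k hk => ?_
  · intro k; cases k <;> simp [aliveWeight]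
  · cases β <;> cases k <;> simp only [drift, aliveWeight, size, hit] <;> push_cast <;> linarith
  · have := hκ k hk
    cases β <;> cases k <;> simp only [drift, aliveWeight, size, hit, forcedCount] at this ⊢ <;>
      push_cast <;> linarith

omit hq in
lemma drift_occWeight_le (β : Bool) {y : ℝ} (hy : 1 ≤ y) (k : Kind) :
    drift β q (occWeight y) k ≤ occWeight (y - q * (y - 1)) k := by
  have hcube : 0 ≤ (q * (y - 1)) ^ 2 * (3 * y - q * (y - 1)) :=
    mul_nonneg (sq_nonneg _) (by nlinarith)
  rw [drift, occWeight, occWeight, occWeight, k.size_hit]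
  cases k <;> simp only [size] <;> norm_num <;> nlinarith

omit hq in
lemma drift_shortWeight_le (β : Bool) {y : ℝ} (hy : 1 ≤ y) (k : Kind) :
    drift β q (shortWeight y) k ≤ shortWeight (y - q * (y - 1)) k *
      Real.exp (if k = one3 then 3 * q * (y ^ 2 - 1) else 0) := by
  rw [drift, shortWeight_of_ne_one3 (hit_ne_one3 β k)]
  split_ifs with hk
  · subst hk
    have := Real.add_one_le_exp (3 * q * (y ^ 2 - 1))
    cases β <;> simp only [shortWeight, occWeight, size, hit, if_true] <;> push_cast <;> linarith
  · rw [shortWeight_of_ne_one3 hk, shortWeight_of_ne_one3 hk, Real.exp_zero, mul_one]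
    exact drift_occWeight_le hq3 β hy k

end Drift

/-! ### Numerical estimates -/

/-- The solution, up to a constant, of the fluid limit equation for the number per variable of
variable occurrences outside `one3`, when a fraction `t` of the variables is left. The clause
density `0.54603` leaves some room above `0.546`. -/
noncomputable def fluid (t : ℝ) : ℝ := Real.log t + 3 * 0.54603 * (1 - t ^ 2)

/-- An upper bound for the number of variable occurrences outside `one3`, per variable left, when a
fraction `s` of the variables is left. It is a small excess over `fluid`, which has its maximum near
`0.55`, and is kept constant below. -/
noncomputable def shortDensity (s : ℝ) : ℝ := 1 / 10 ^ 5 + fluid (max s 0.55)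

/-- An upper bound for the expected number of `zero1` descendants of a `one1` constraint: setting
its variable to true shortens the `one3` and the `one2` constraints that contain the variable. -/
noncomputable def offspring (s : ℝ) : ℝ := 6 * 0.54602 * s ^ 2 + shortDensity s + 1 / 10 ^ 4

lemma fluid_sub_le {t t' : ℝ} (ht : 0 < t) (h : t ≤ t') :
    fluid t' - fluid t ≤ (t' - t) * (1 / t - 6 * 0.54603 * t) := by
  have hlog := Real.log_le_sub_one_of_pos (div_pos (ht.trans_le h) ht)
  rw [Real.log_div (ht.trans_le h).ne' ht.ne', div_sub_one ht.ne', div_eq_mul_one_div] at hlog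
  unfold fluid
  nlinarith [sq_nonneg (t' - t)]

lemma shortDensity_ge {s : ℝ} (hs : s ≤ 1) : 1 / 10 ^ 5 ≤ shortDensity s := by
  have h1 : (0.55 : ℝ) ≤ max s 0.55 := le_max_right _ _
  have h2 : max s 0.55 ≤ (1 : ℝ) := max_le hs (by norm_num)
  rw [shortDensity, fluid]
  set t := max s (0.55 : ℝ)
  have hlog := Real.one_sub_inv_le_log_of_pos (show 0 < t by linarith)
  have hinv : t⁻¹ ≤ 1 + 2 * (1 - t) := by
    rw [inv_le_iff_one_le_mul₀ (by linarith)]; nlinarith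
  nlinarith

lemma shortDensity_le {s : ℝ} (hs : s ≤ 1) : shortDensity s ≤ 6 / 5 := by
  have h1 : (0.55 : ℝ) ≤ max s 0.55 := le_max_right _ _
  have h2 : max s 0.55 ≤ (1 : ℝ) := max_le hs (by norm_num)
  rw [shortDensity, fluid]
  have hlog := Real.log_nonpos (by linarith) h2
  nlinarith

/-- A discrete form of the differential inequality `f' < 1 / t - 6 * 0.54602 * t`. -/
lemma shortDensity_sub_le {s h : ℝ} (hs : 1 / 10 ≤ s) (hh : 0 < h) (hh' : h ≤ 1 / 10 ^ 8) :
    shortDensity (s + h) - shortDensity s ≤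
      h * (1 / (s + h) - 6 * 0.54602 * (s + h) - 1 / 10 ^ 5) := by
  have hinv : ∀ t : ℝ, 0.55 ≤ t → s + h ≤ t + 1 / 10 ^ 7 → 1 / t ≤ 1 / (s + h) + 4 / 10 ^ 7 := by
    intro t ht hst
    rw [div_add' _ _ _ (by positivity), div_le_div_iff₀ (by positivity) (by positivity)]
    nlinarith
  simp only [shortDensity, add_sub_add_left_eq_sub]
  rcases le_total s 0.55 with hs' | hs'
  · rcases le_total (s + h) 0.55 with hsh | hsh
    · have : 1.81 ≤ 1 / (s + h) := by
        rw [le_div_iff₀ (by linarith)]; nlinarith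
      rw [max_eq_right hs', max_eq_right hsh, sub_self]
      nlinarith
    · rw [max_eq_right hs', max_eq_left hsh]
      calc fluid (s + h) - fluid 0.55
          ≤ (s + h - 0.55) * (1 / 0.55 - 6 * 0.54603 * 0.55) := fluid_sub_le (by norm_num) hsh
        _ ≤ h * (1 / 0.55 - 6 * 0.54603 * 0.55) :=
          mul_le_mul_of_nonneg_right (by linarith) (by norm_num)
        _ ≤ h * (1 / (s + h) - 6 * 0.54602 * (s + h) - 1 / 10 ^ 5) := by
          have := hinv 0.55 le_rfl (by linarith)
          exact mul_le_mul_of_nonneg_left (by linarith) hh.le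
  · rw [max_eq_left hs', max_eq_left (by linarith)]
    refine (fluid_sub_le (by linarith) (by linarith)).trans ?_
    have := hinv s hs' (by linarith)
    rw [add_sub_cancel_left]
    exact mul_le_mul_of_nonneg_left (by linarith) hh.le

lemma offspring_ge {s : ℝ} (hs : s ≤ 1) : 1 / 10 ^ 4 ≤ offspring s := by
  unfold offspring
  nlinarith [shortDensity_ge hs, sq_nonneg s]

lemma offspring_le {s : ℝ} (h0 : 0 ≤ s) (hs : s ≤ 1) : offspring s ≤ 5 := by
  unfold offspring
  nlinarith [shortDensity_le hs]

lemma offspring_mono {s s' : ℝ} (h0 : 0 ≤ s) (h : s ≤ s') : offspring s ≤ offspring s' := by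
  have hlog : Real.log (max s 0.55) ≤ Real.log (max s' 0.55) :=
    Real.log_le_log (lt_of_lt_of_le (by norm_num) (le_max_right _ _)) (max_le_max_right _ h)
  have hsq : (max s' 0.55) ^ 2 - (max s 0.55) ^ 2 ≤ s' ^ 2 - s ^ 2 := by
    rcases max_cases s 0.55 with ⟨e, _⟩ | ⟨e, _⟩ <;>
      rcases max_cases s' 0.55 with ⟨e', _⟩ | ⟨e', _⟩ <;> rw [e, e'] <;> nlinarith
  unfold offspring shortDensity fluid
  nlinarith

lemma log_seven_tenths_le : Real.log 0.7 ≤ -0.35667 := by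
  have h := Real.abs_log_sub_add_sum_range_le (x := (0.3 : ℝ)) (by norm_num [abs_of_pos]) 12
  rw [abs_of_pos (by norm_num : (0 : ℝ) < 0.3)] at h
  have h2 := (abs_le.1 h).2
  rw [show (1 : ℝ) - 0.3 = 0.7 by norm_num] at h2
  norm_num [Finset.sum_range_succ] at h2 ⊢
  linarith

/-- The tangent to the logarithm at `0.7` in place of the logarithm in `fluid`; the product
`shortDensity s * offspring s` is largest near `0.698`. -/
noncomputable def fluidTangent (t : ℝ) : ℝ :=
  -0.35667 + (t - 0.7) / 0.7 + 3 * 0.54603 * (1 - t ^ 2)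

lemma fluid_le_fluidTangent {t : ℝ} (ht : 0 < t) : fluid t ≤ fluidTangent t := by
  have hlog := Real.log_le_sub_one_of_pos (show 0 < t / 0.7 by positivity)
  rw [Real.log_div ht.ne' (by norm_num), div_sub_one (by norm_num)] at hlog
  have := log_seven_tenths_le
  unfold fluid fluidTangent
  linarith

lemma fluidTangent_mul_le {t : ℝ} (h1 : 0.55 ≤ t) (h2 : t ≤ 1) :
    (1 / 10 ^ 5 + fluidTangent t) *
      (6 * 0.54602 * t ^ 2 + (1 / 10 ^ 5 + fluidTangent t) + 1 / 10 ^ 4) ≤ 1 - 1 / 10 ^ 4 := by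
  obtain ⟨w, rfl⟩ : ∃ w, t = w + 0.698248 := ⟨t - 0.698248, by ring⟩
  have ha : 0 ≤ w + 0.15 := by linarith
  have hb : 0 ≤ 0.31 - w := by linarith
  have e1 := sq_nonneg (w * (w + 1.3965))
  have e2 := sq_nonneg w
  have e3 := mul_nonneg ha (sq_nonneg w)
  have e4 := mul_nonneg hb (sq_nonneg w)
  rw [← sub_nonneg, fluidTangent]
  ring_nf at e1 e2 e3 e4 ha hb ⊢
  linarith

/-- The branching process of forced variables is subcritical: this is where the density `0.546`
comes from. -/
lemma shortDensity_mul_offspring_le {s : ℝ} (h0 : 0 ≤ s) (hs : s ≤ 1) :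
    shortDensity s * offspring s ≤ 1 - 1 / 10 ^ 4 := by
  have h1 : (0.55 : ℝ) ≤ max s 0.55 := le_max_right _ _
  have h2 : max s 0.55 ≤ (1 : ℝ) := max_le hs (by norm_num)
  have hle : shortDensity s ≤ 1 / 10 ^ 5 + fluidTangent (max s 0.55) :=
    add_le_add_right (fluid_le_fluidTangent (by linarith)) _
  have hD : 0 ≤ shortDensity s := le_trans (by norm_num) (shortDensity_ge hs)
  refine le_trans ?_ (fluidTangent_mul_le h1 h2)
  unfold offspring
  gcongr
  · exact hD.trans hle
  · exact le_max_left _ _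

/-! ### The potential -/

/-- The exponential tilt of the potentials that count constraints and occurrences. -/
noncomputable def tilt : ℝ := 1 / 10 ^ 9

/-- The exponential tilt of the potential of forced variables. -/
noncomputable def forcedTilt : ℝ := 1 / 10 ^ 6

/-- The relative decrease of the potential of forced variables when a forced variable is exposed. -/
noncomputable def gain : ℝ := forcedTilt / 40000

/-- The scale of the potential of forced variables, so large that its decrease pays for the
probability of a contradiction. -/
noncomputable def forcedScale : ℝ := 10 / (gain * (forcedTilt / 10 ^ 4))

/-- The rate at which the probability of a contradiction accumulates when variables are exposed that
are not forced. -/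
noncomputable def freeCost : ℝ := 2 * (2 * forcedScale + 1)

/-- The weight of an occurrence of a variable, when a fraction `s` of the variables is left. -/
noncomputable def occTilt (s : ℝ) : ℝ := 1 + tilt / s

/-- The weight of a constraint of kind `one3`, when a fraction `s` of the variables is left. -/
noncomputable def one3Tilt (s : ℝ) : ℝ := 1 + tilt / s ^ 3

/-- A potential below `1` bounds the number of constraints of kind `one3`. In all potentials, `h` is
the reciprocal of the total number of variables. -/
noncomputable def one3Potential (h s : ℝ) (κ : List Kind) : ℝ :=
  Real.exp (-(tilt * 0.54601 / h)) * (κ.map (one3Weight (one3Tilt s))).prod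

/-- A potential below `1` shows that some number of variables is left. -/
noncomputable def occPotential (h s : ℝ) (κ : List Kind) : ℝ :=
  Real.exp (-(tilt * (3 * 0.5461 + 0.8 * Real.log s) / h)) *
    (κ.map (occWeight (occTilt s))).prod

/-- A potential below `1` bounds the number of occurrences outside the constraints of kind
`one3`. -/
noncomputable def shortPotential (h s : ℝ) (κ : List Kind) : ℝ :=
  Real.exp (-(tilt * shortDensity s / h)) * (κ.map (shortWeight (occTilt s))).prod

/-- The potential of forced variables. One that is forced to be true counts for `offspring` many
that are forced to be false. -/
noncomputable def forcedPotential (s : ℝ) (κ : List Kind) : ℝ :=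
  (κ.map (forcedWeight (Real.exp (forcedTilt * offspring s)) (Real.exp forcedTilt))).prod

/-- The lower bound for the probability that random constraints of the kinds in `κ` are
satisfiable, when a fraction `s` of the `1 / h` variables is left. -/
noncomputable def potential (h s : ℝ) (κ : List Kind) : ℝ :=
  Real.exp (-(freeCost * s)) *
      ((κ.map aliveWeight).prod - forcedScale * h * forcedPotential s κ) -
    one3Potential h s κ - occPotential h s κ - shortPotential h s κ

lemma tilt_pos : 0 < tilt := by unfold tilt; positivity

lemma forcedTilt_pos : 0 < forcedTilt := by unfold forcedTilt; positivity

lemma gain_pos : 0 < gain := div_pos forcedTilt_pos (by norm_num)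

lemma forcedScale_pos : 0 < forcedScale :=
  div_pos (by norm_num) (mul_pos gain_pos (div_pos forcedTilt_pos (by norm_num)))

lemma freeCost_pos : 0 < freeCost := by
  unfold freeCost
  linarith [forcedScale_pos]

lemma one_le_occTilt {s : ℝ} (hs : 0 ≤ s) : 1 ≤ occTilt s :=
  le_add_of_nonneg_right (div_nonneg tilt_pos.le hs)

lemma one_le_one3Tilt {s : ℝ} (hs : 0 ≤ s) : 1 ≤ one3Tilt s :=
  le_add_of_nonneg_right (div_nonneg tilt_pos.le (pow_nonneg hs 3))

lemma aliveWeight_nonneg (k : Kind) : 0 ≤ aliveWeight k := by cases k <;> simp [aliveWeight]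

lemma aliveWeight_le_one (k : Kind) : aliveWeight k ≤ 1 := by cases k <;> simp [aliveWeight]

lemma forcedCount_nonneg (k : Kind) : 0 ≤ forcedCount k := by cases k <;> simp [forcedCount]

lemma one_le_one3Weight {a : ℝ} (ha : 1 ≤ a) (k : Kind) : 1 ≤ one3Weight a k := by
  cases k <;> simp [one3Weight, ha]

lemma one_le_occWeight {y : ℝ} (hy : 1 ≤ y) (k : Kind) : 1 ≤ occWeight y k := one_le_pow₀ hy

lemma one_le_shortWeight {y : ℝ} (hy : 1 ≤ y) (k : Kind) : 1 ≤ shortWeight y k := by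
  unfold shortWeight
  split_ifs
  exacts [le_rfl, one_le_pow₀ hy]

lemma forcedWeight_pos {a b : ℝ} (ha : 0 < a) (hb : 0 < b) (k : Kind) :
    0 < forcedWeight a b k := by
  cases k <;> simp [forcedWeight, ha, hb]

lemma one3Potential_nonneg {s : ℝ} (h : ℝ) (hs : 0 ≤ s) (κ : List Kind) :
    0 ≤ one3Potential h s κ :=
  mul_nonneg (Real.exp_pos _).le
    (zero_le_one.trans (one_le_prod_map (one_le_one3Weight (one_le_one3Tilt hs)) κ))

lemma occPotential_nonneg {s : ℝ} (h : ℝ) (hs : 0 ≤ s) (κ : List Kind) :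
    0 ≤ occPotential h s κ :=
  mul_nonneg (Real.exp_pos _).le
    (zero_le_one.trans (one_le_prod_map (one_le_occWeight (one_le_occTilt hs)) κ))

lemma shortPotential_nonneg {s : ℝ} (h : ℝ) (hs : 0 ≤ s) (κ : List Kind) :
    0 ≤ shortPotential h s κ :=
  mul_nonneg (Real.exp_pos _).le
    (zero_le_one.trans (one_le_prod_map (one_le_shortWeight (one_le_occTilt hs)) κ))

lemma forcedPotential_nonneg (s : ℝ) (κ : List Kind) : 0 ≤ forcedPotential s κ :=
  List.prod_nonneg <| List.forall_mem_map.2 fun k _ =>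
    (forcedWeight_pos (Real.exp_pos _) (Real.exp_pos _) k).le

lemma potential_perm {κ κ' : List Kind} (hκ : κ.Perm κ') (h s : ℝ) :
    potential h s κ = potential h s κ' := by
  simp only [potential, one3Potential, occPotential, shortPotential, forcedPotential,
    fun w : Kind → ℝ => (hκ.map w).prod_eq]

lemma prod_aliveWeight_le_one (κ : List Kind) : (κ.map aliveWeight).prod ≤ 1 := by
  simpa using List.prod_map_le_prod_map₀ (s := κ) aliveWeight (fun _ => 1)
    (fun k _ => aliveWeight_nonneg k) fun k _ => aliveWeight_le_one k

lemma potential_le {h s : ℝ} (hh : 0 ≤ h) (hs : 0 ≤ s) (κ : List Kind) :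
    potential h s κ ≤
      1 - one3Potential h s κ - occPotential h s κ - shortPotential h s κ := by
  have hexp : Real.exp (-(freeCost * s)) ≤ 1 :=
    Real.exp_le_one_iff.2 (neg_nonpos.2 (mul_nonneg freeCost_pos.le hs))
  have hforced : 0 ≤ forcedScale * h * forcedPotential s κ :=
    mul_nonneg (mul_nonneg forcedScale_pos.le hh) (forcedPotential_nonneg s κ)
  unfold potential
  gcongr
  refine (mul_le_of_le_one_right (Real.exp_pos _).le ?_).trans hexp
  linarith [prod_aliveWeight_le_one κ]

lemma alive_of_potential_pos {h s : ℝ} (hh : 0 ≤ h) (hs : 0 ≤ s) {κ : List Kind}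
    (hpos : 0 < potential h s κ) : ∀ k ∈ κ, aliveWeight k = 1 := by
  intro k hk
  by_contra hne
  have hk0 : aliveWeight k = 0 := by cases k <;> simp_all [aliveWeight]
  have hprod : (κ.map aliveWeight).prod = 0 :=
    List.prod_eq_zero (hk0 ▸ List.mem_map_of_mem hk)
  have hforced : 0 ≤ Real.exp (-(freeCost * s)) * (forcedScale * h * forcedPotential s κ) :=
    mul_nonneg (Real.exp_pos _).le
      (mul_nonneg (mul_nonneg forcedScale_pos.le hh) (forcedPotential_nonneg s κ))
  rw [potential, hprod] at hpos
  linarith [one3Potential_nonneg h hs κ, occPotential_nonneg h hs κ,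
    shortPotential_nonneg h hs κ]

lemma forcedPotential_lt_of_potential_pos {h s : ℝ} (hs : 0 ≤ s) {κ : List Kind}
    (hpos : 0 < potential h s κ) : forcedScale * h * forcedPotential s κ < 1 := by
  have hmul : 0 < Real.exp (-(freeCost * s)) *
      ((κ.map aliveWeight).prod - forcedScale * h * forcedPotential s κ) := by
    unfold potential at hpos
    linarith [one3Potential_nonneg h hs κ, occPotential_nonneg h hs κ,
      shortPotential_nonneg h hs κ]
  linarith [pos_of_mul_pos_right hmul (Real.exp_pos _).le, prod_aliveWeight_le_one κ]

/-! ### States of positive potential -/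

/-- The properties of the states of positive potential: there is no violated constraint, and the
numbers of constraints of the kinds `one3` and `one2` are bounded. -/
structure Balanced (h s : ℝ) (κ : List Kind) : Prop where
  alive : ∀ k ∈ κ, aliveWeight k = 1
  one3_le : h / s * κ.count one3 ≤ 0.54602 * s ^ 2
  one2_le : h / s * (2 * κ.count one2) ≤ (1 + 1 / 10 ^ 8) * shortDensity s

lemma mul_lt_of_exp_mul_pow_lt_one {h z ρ c : ℝ} (hh : 0 < h) (hz : 0 < z) (hc : 0 < c) {m : ℕ}
    (hm : Real.exp (-(z * ρ / h)) * (1 + z / c) ^ m < 1) : h * m < ρ * (c + z) := by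
  have hy : 0 < 1 + z / c := by positivity
  rw [← Real.exp_log (pow_pos hy m), Real.log_pow, ← Real.exp_add, Real.exp_lt_one_iff] at hm
  have hlog : z / (c + z) ≤ Real.log (1 + z / c) := by
    refine le_of_eq_of_le ?_ (Real.one_sub_inv_le_log_of_pos hy)
    field_simp
    ring
  have hlt : m * (z / (c + z)) < z * ρ / h := by
    linarith [mul_le_mul_of_nonneg_left hlog m.cast_nonneg]
  rw [mul_div_assoc', div_lt_div_iff₀ (by positivity) hh] at hlt
  exact lt_of_mul_lt_mul_left (by linarith) hz.le

lemma count_one3_le {h s : ℝ} (hh : 0 < h) (hs : 1 / 10 ≤ s) {κ : List Kind}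
    (hlt : one3Potential h s κ < 1) : h / s * κ.count one3 ≤ 0.54602 * s ^ 2 := by
  have hs0 : 0 < s := by linarith
  have hpow : one3Tilt s ^ κ.count one3 ≤ (κ.map (one3Weight (one3Tilt s))).prod :=
    pow_count_le_prod_map (one_le_one3Weight (one_le_one3Tilt hs0.le)) one3 κ
  have hlt' := mul_lt_of_exp_mul_pow_lt_one hh tilt_pos (pow_pos hs0 3)
    ((mul_le_mul_of_nonneg_left hpow (Real.exp_pos _).le).trans_lt hlt)
  have htilt : 0.54601 * tilt ≤ 0.00001 * s ^ 3 := by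
    have : (1 / 10 : ℝ) ^ 3 ≤ s ^ 3 := by gcongr
    unfold tilt
    linarith
  rw [div_mul_eq_mul_div, div_le_iff₀ hs0]
  linarith

lemma count_one2_le {h s : ℝ} (hh : 0 < h) (hs : 1 / 10 ≤ s) (hs1 : s ≤ 1) {κ : List Kind}
    (hlt : shortPotential h s κ < 1) :
    h / s * (2 * κ.count one2) ≤ (1 + 1 / 10 ^ 8) * shortDensity s := by
  have hs0 : 0 < s := by linarith
  have hpow : occTilt s ^ (2 * κ.count one2) ≤ (κ.map (shortWeight (occTilt s))).prod := by
    rw [pow_mul]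
    exact pow_count_le_prod_map (one_le_shortWeight (one_le_occTilt hs0.le)) one2 κ
  have hlt' := mul_lt_of_exp_mul_pow_lt_one hh tilt_pos hs0
    ((mul_le_mul_of_nonneg_left hpow (Real.exp_pos _).le).trans_lt hlt)
  have htilt : s + tilt ≤ (1 + 1 / 10 ^ 8) * s := by
    unfold tilt
    linarith
  have hD : 0 ≤ shortDensity s := le_trans (by norm_num) (shortDensity_ge hs1)
  rw [div_mul_eq_mul_div, div_le_iff₀ hs0]
  push_cast at hlt'
  linarith [mul_le_mul_of_nonneg_left htilt hD]

lemma balanced_of_potential_pos {h s : ℝ} (hh : 0 < h) (hs : 1 / 10 ≤ s) (hs1 : s ≤ 1)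
    {κ : List Kind} (hpos : 0 < potential h s κ) : Balanced h s κ := by
  have hs0 : 0 ≤ s := by linarith
  have hle := potential_le hh.le hs0 κ
  have h3 := one3Potential_nonneg h hs0 κ
  have hocc := occPotential_nonneg h hs0 κ
  have hshort := shortPotential_nonneg h hs0 κ
  exact ⟨alive_of_potential_pos hh.le hs0 hpos, count_one3_le hh hs (by linarith),
    count_one2_le hh hs hs1 (by linarith)⟩

lemma Balanced.of_perm_cons {h s : ℝ} (hh : 0 ≤ h / s) {k : Kind} {κ κ' : List Kind}
    (hκ : Balanced h s κ) (hp : κ.Perm (k :: κ')) : Balanced h s κ' where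
  alive i hi := hκ.alive i (hp.mem_iff.2 (List.mem_cons_of_mem k hi))
  one3_le := by
    have : κ'.count one3 ≤ κ.count one3 := hp.count_eq one3 ▸ List.count_le_count_cons
    refine le_trans ?_ hκ.one3_le
    gcongr
  one2_le := by
    have : κ'.count one2 ≤ κ.count one2 := hp.count_eq one2 ▸ List.count_le_count_cons
    refine le_trans ?_ hκ.one2_le
    gcongr

/-! ### The expected potential after the exposure of a variable -/

/-- The reciprocals `h` of the numbers of variables that are large enough for the potential
argument. -/
structure Small (h : ℝ) : Prop where
  pos : 0 < h
  le : h ≤ 1 / 10 ^ 9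
  freeCost_mul_le : freeCost * h ≤ 1 / 2
  exp_le : 6 * Real.exp (-(tilt * (1 / 10 ^ 5) / h)) ≤ Real.exp (-freeCost) * h

/-- The fractions `s` of variables left after the exposure of a variable for which the potential
argument works. -/
structure Admissible (h s : ℝ) : Prop extends Small h where
  ge : 1 / 10 ≤ s
  add_le : s + h ≤ 1

namespace Admissible

variable {h s : ℝ} (hs : Admissible h s)

include hs

lemma fraction_pos : 0 < s := by linarith [hs.ge]

lemma add_pos : 0 < s + h := by linarith [hs.ge, hs.pos]

lemma prob_nonneg : 0 ≤ h / (s + h) := div_nonneg hs.pos.le hs.add_pos.le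

lemma prob_le : h / (s + h) ≤ 10 * h := by
  rw [div_le_iff₀ hs.add_pos]
  nlinarith [hs.ge, hs.pos]

lemma three_mul_prob_le : 3 * (h / (s + h)) ≤ 1 := by linarith [hs.prob_le, hs.le]

lemma occTilt_add : occTilt (s + h) = occTilt s - h / (s + h) * (occTilt s - 1) := by
  have := hs.fraction_pos
  have := hs.add_pos
  unfold occTilt
  field_simp
  ring

lemma one3Tilt_sub_one_le :
    (1 - 3 * (h / (s + h))) * (one3Tilt s - 1) ≤ one3Tilt (s + h) - 1 := by
  have hs0 := hs.fraction_pos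
  have hsh := hs.add_pos
  have hcube : 1 - 3 * (h / (s + h)) ≤ (s / (s + h)) ^ 3 := by
    have hq := one_add_mul_le_pow (a := -(h / (s + h))) (by linarith [hs.prob_le, hs.le]) 3
    have hone : 1 + -(h / (s + h)) = s / (s + h) := by field_simp; ring
    rw [hone] at hq
    push_cast at hq
    linarith
  calc (1 - 3 * (h / (s + h))) * (one3Tilt s - 1)
      ≤ (s / (s + h)) ^ 3 * (one3Tilt s - 1) := by
        gcongr
        linarith [one_le_one3Tilt hs0.le]
    _ = one3Tilt (s + h) - 1 := by
        unfold one3Tilt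
        field_simp
        ring

lemma occTilt_le_mul_exp : occTilt s ≤ occTilt (s + h) * Real.exp (tilt / 10 ^ 7) := by
  have ht := tilt_pos
  have hsub : occTilt s - occTilt (s + h) ≤ tilt / 10 ^ 7 := by
    have hle : (occTilt s - 1) ≤ tilt * 10 := by
      rw [occTilt, add_sub_cancel_left, div_le_iff₀ hs.fraction_pos]
      nlinarith [hs.ge]
    have hq : h / (s + h) ≤ 1 / 10 ^ 8 := by linarith [hs.prob_le, hs.le]
    rw [hs.occTilt_add, sub_sub_cancel]
    calc h / (s + h) * (occTilt s - 1) ≤ 1 / 10 ^ 8 * (tilt * 10) := by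
          gcongr
          linarith [one_le_occTilt hs.fraction_pos.le]
      _ = tilt / 10 ^ 7 := by ring
  have hone := one_le_occTilt hs.add_pos.le
  have hexp := Real.add_one_le_exp (tilt / 10 ^ 7)
  nlinarith

lemma exp_le_occTilt_add :
    Real.exp (tilt / (s + h) - tilt / 10 ^ 7) ≤ occTilt (s + h) := by
  have ht := tilt_pos
  have hsh := hs.add_pos
  have hu : tilt / (s + h) ≤ 10 * tilt := by
    rw [div_le_iff₀ hsh]
    nlinarith [hs.ge, hs.pos]
  have hu0 : 0 ≤ tilt / (s + h) := by positivity
  rw [← Real.le_log_iff_exp_le (by unfold occTilt; positivity), occTilt]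
  refine le_trans ?_ (Real.le_log_one_add_of_nonneg hu0)
  set u := tilt / (s + h)
  rw [le_div_iff₀ (by positivity)]
  unfold tilt at *
  nlinarith

/-- The expected loss of occurrences outweighs, by the factor `occTilt (s + h)`, the change of a
normalization `exp (-(tilt * F s / h))` when `F` grows slower than `log`. -/
lemma exp_mul_occTilt_pow_le {F F' X : ℝ} {j : ℕ} (hj : j ≤ 2)
    (hX : tilt * (F' - F) / h + X ≤ tilt * (1 / (s + h) - 3 / 10 ^ 7)) :
    Real.exp (-(tilt * F / h)) * occTilt s ^ j * Real.exp X ≤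
      Real.exp (-(tilt * F' / h)) * occTilt (s + h) ^ (j + 1) := by
  have hone := one_le_occTilt hs.add_pos.le
  have hpow : occTilt s ^ j ≤ occTilt (s + h) ^ j * Real.exp (2 * (tilt / 10 ^ 7)) := by
    have hj' : (j : ℝ) ≤ 2 := by exact_mod_cast hj
    have ht : 0 ≤ tilt / 10 ^ 7 := div_nonneg tilt_pos.le (by norm_num)
    calc occTilt s ^ j ≤ (occTilt (s + h) * Real.exp (tilt / 10 ^ 7)) ^ j :=
          pow_le_pow_left₀ (zero_le_one.trans (one_le_occTilt hs.fraction_pos.le))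
            hs.occTilt_le_mul_exp j
      _ = occTilt (s + h) ^ j * Real.exp (j * (tilt / 10 ^ 7)) := by
          rw [mul_pow, ← Real.exp_nat_mul]
      _ ≤ _ := by gcongr
  calc Real.exp (-(tilt * F / h)) * occTilt s ^ j * Real.exp X
      ≤ Real.exp (-(tilt * F / h)) *
          (occTilt (s + h) ^ j * Real.exp (2 * (tilt / 10 ^ 7))) * Real.exp X := by gcongr
    _ = Real.exp (-(tilt * F / h) + 2 * (tilt / 10 ^ 7) + X) * occTilt (s + h) ^ j := by
        rw [Real.exp_add, Real.exp_add]
        ring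
    _ ≤ Real.exp (-(tilt * F' / h) + (tilt / (s + h) - tilt / 10 ^ 7)) *
          occTilt (s + h) ^ j := by
        have hsplit : tilt * (F' - F) / h = tilt * F' / h - tilt * F / h := by ring
        have hinv : tilt * (1 / (s + h) - 3 / 10 ^ 7) = tilt / (s + h) - 3 * (tilt / 10 ^ 7) := by
          ring
        refine mul_le_mul_of_nonneg_right (Real.exp_le_exp.2 ?_) (by positivity)
        linarith
    _ ≤ Real.exp (-(tilt * F' / h)) * occTilt (s + h) * occTilt (s + h) ^ j := by
        rw [Real.exp_add]
        gcongr
        exact hs.exp_le_occTilt_add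
    _ = _ := by ring

lemma exposeMean_one3Potential_le (β : Bool) (k : Kind) (κ : List Kind) :
    exposeMean β (h / (s + h)) κ (fun κ' => one3Potential h s (hit β k :: κ')) ≤
      one3Potential h (s + h) (k :: κ) := by
  have ha := one_le_one3Tilt hs.fraction_pos.le
  have ha' := one_le_one3Tilt hs.add_pos.le
  refine exposeMean_mul_prod_cons_le (e := fun _ => 0) hs.prob_nonneg hs.three_mul_prob_le β
    (Real.exp_pos _).le (fun k => zero_le_one.trans (one_le_one3Weight ha k))
    (fun k => zero_le_one.trans (one_le_one3Weight ha' k)) (fun i => ?_) κ ?_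
  · simpa using drift_one3Weight_le β hs.one3Tilt_sub_one_le i
  · have hhit : one3Weight (one3Tilt s) (hit β k) = 1 := by cases β <;> cases k <;> rfl
    simpa [hhit] using le_mul_of_one_le_right (Real.exp_pos _).le (one_le_one3Weight ha' k)

lemma log_sub_log_le :
    0.8 * (Real.log (s + h) - Real.log s) / h ≤ 1 / (s + h) - 3 / 10 ^ 7 := by
  have hs0 := hs.fraction_pos
  have hsh := hs.add_pos
  have hlog : Real.log (s + h) - Real.log s ≤ h / s := by
    rw [← Real.log_div hsh.ne' hs0.ne']
    refine (Real.log_le_sub_one_of_pos (div_pos hsh hs0)).trans_eq ?_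
    rw [div_sub_one hs0.ne', add_sub_cancel_left]
  have hinv : 0.8 / s ≤ 1 / (s + h) - 3 / 10 ^ 7 := by
    rw [div_le_iff₀ hs0, sub_mul, one_div_mul_eq_div, le_sub_iff_add_le, le_div_iff₀ hsh]
    nlinarith [hs.ge, hs.le, hs.add_le, hs.pos]
  refine le_trans ?_ hinv
  rw [div_le_iff₀ hs.pos, div_mul_eq_mul_div, mul_div_assoc]
  gcongr

lemma exposeMean_occPotential_le (β : Bool) {k : Kind} (hk : k.size ≠ 0) (κ : List Kind) :
    exposeMean β (h / (s + h)) κ (fun κ' => occPotential h s (hit β k :: κ')) ≤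
      occPotential h (s + h) (k :: κ) := by
  have hy := one_le_occTilt hs.fraction_pos.le
  have hy' := one_le_occTilt hs.add_pos.le
  refine exposeMean_mul_prod_cons_le (e := fun _ => 0) hs.prob_nonneg hs.three_mul_prob_le β
    (Real.exp_pos _).le (fun k => zero_le_one.trans (one_le_occWeight hy k))
    (fun k => zero_le_one.trans (one_le_occWeight hy' k)) (fun i => ?_) κ ?_
  · simpa [← hs.occTilt_add] using drift_occWeight_le hs.three_mul_prob_le β hy i
  · rw [occWeight, occWeight, k.size_hit, ← Nat.sub_add_cancel (Nat.one_le_iff_ne_zero.2 hk),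
      Nat.add_sub_cancel, List.sum_map_zero]
    refine hs.exp_mul_occTilt_pow_le (F := 3 * 0.5461 + 0.8 * Real.log s)
      (Nat.sub_le_of_le_add k.size_le_three) ?_
    rw [add_sub_add_left_eq_sub, ← mul_sub, add_zero, mul_div_assoc]
    exact mul_le_mul_of_nonneg_left hs.log_sub_log_le tilt_pos.le

lemma one3_error_le {m : ℕ} (hm : h / (s + h) * m ≤ 0.54602 * (s + h) ^ 2) :
    3 * (h / (s + h)) * (occTilt s ^ 2 - 1) * m ≤ tilt * (6 * 0.54602 * (s + h) + 9 / 10 ^ 6) := by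
  have hs0 := hs.fraction_pos
  have hy : 0 ≤ occTilt s ^ 2 - 1 := sub_nonneg.2 (one_le_pow₀ (one_le_occTilt hs0.le))
  have hsq : occTilt s ^ 2 - 1 = tilt * ((2 * s + tilt) / s ^ 2) := by
    unfold occTilt
    field_simp
    ring
  have hle : (s + h) ^ 2 * ((2 * s + tilt) / s ^ 2) ≤ 2 * (s + h) + 1 / 10 ^ 6 := by
    rw [mul_div_assoc', div_le_iff₀ (by positivity)]
    have hh := hs.pos
    have h1 : s ^ 2 * h ≤ s ^ 2 * (1 / 10 ^ 9) := by gcongr; exact hs.le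
    have h2 : (2 * s * h + h ^ 2) * (2 * s + tilt) ≤ 3 * s * h * (3 * s) := by
      have := tilt_pos
      gcongr
      · nlinarith [hs.ge, hs.le]
      · unfold tilt; linarith [hs.ge]
    unfold tilt at *
    nlinarith
  calc 3 * (h / (s + h)) * (occTilt s ^ 2 - 1) * m
      = 3 * (h / (s + h) * m) * (occTilt s ^ 2 - 1) := by ring
    _ ≤ 3 * (0.54602 * (s + h) ^ 2) * (occTilt s ^ 2 - 1) := by gcongr
    _ = tilt * (3 * 0.54602 * ((s + h) ^ 2 * ((2 * s + tilt) / s ^ 2))) := by rw [hsq]; ring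
    _ ≤ tilt * (3 * 0.54602 * (2 * (s + h) + 1 / 10 ^ 6)) := by
        have := tilt_pos
        gcongr
    _ ≤ tilt * (6 * 0.54602 * (s + h) + 9 / 10 ^ 6) :=
        mul_le_mul_of_nonneg_left (by linarith) tilt_pos.le

lemma exposeMean_shortPotential_cons_le {β : Bool} {k : Kind} {κ : List Kind} {c : ℝ}
    (hc : Real.exp (-(tilt * shortDensity s / h)) * occTilt s ^ (k.size - 1) *
        Real.exp (3 * (h / (s + h)) * (occTilt s ^ 2 - 1) * κ.count one3) ≤
      c * shortWeight (occTilt (s + h)) k) :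
    exposeMean β (h / (s + h)) κ (fun κ' => shortPotential h s (hit β k :: κ')) ≤
      c * ((k :: κ).map (shortWeight (occTilt (s + h)))).prod := by
  have hy := one_le_occTilt hs.fraction_pos.le
  have hy' := one_le_occTilt hs.add_pos.le
  refine exposeMean_mul_prod_cons_le
    (e := fun i => if i = one3 then 3 * (h / (s + h)) * (occTilt s ^ 2 - 1) else 0)
    hs.prob_nonneg hs.three_mul_prob_le β
    (Real.exp_pos _).le (fun k => zero_le_one.trans (one_le_shortWeight hy k))
    (fun k => zero_le_one.trans (one_le_shortWeight hy' k)) (fun i => ?_) κ ?_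
  · simpa only [← hs.occTilt_add] using
      drift_shortWeight_le hs.three_mul_prob_le β hy i
  · rwa [shortWeight_of_ne_one3 (hit_ne_one3 β k), occWeight, k.size_hit, sum_map_ite_eq_mul_count]

lemma exposeMean_shortPotential_le (β : Bool) {k : Kind} (hk : k.size ≠ 0) (hk3 : k ≠ one3)
    {κ : List Kind} (hκ : h / (s + h) * κ.count one3 ≤ 0.54602 * (s + h) ^ 2) :
    exposeMean β (h / (s + h)) κ (fun κ' => shortPotential h s (hit β k :: κ')) ≤
      shortPotential h (s + h) (k :: κ) := by
  refine hs.exposeMean_shortPotential_cons_le ?_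
  have hgrowth : (shortDensity (s + h) - shortDensity s) / h ≤
      1 / (s + h) - 6 * 0.54602 * (s + h) - 1 / 10 ^ 5 := by
    rw [div_le_iff₀' hs.pos]
    exact shortDensity_sub_le hs.ge hs.pos (hs.le.trans (by norm_num))
  rw [shortWeight_of_ne_one3 hk3, occWeight, ← Nat.sub_add_cancel (Nat.one_le_iff_ne_zero.2 hk),
    Nat.add_sub_cancel]
  refine hs.exp_mul_occTilt_pow_le (Nat.sub_le_of_le_add k.size_le_three) ?_
  rw [mul_div_assoc]
  linarith [hs.one3_error_le hκ, mul_le_mul_of_nonneg_left hgrowth tilt_pos.le, tilt_pos]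

lemma exposeMean_shortPotential_one3_le (β : Bool) {κ : List Kind}
    (hκ : h / (s + h) * κ.count one3 ≤ 0.54602 * (s + h) ^ 2)
    (hκ' : ∀ k ∈ κ, k = one3 ∨ k = sat) :
    exposeMean β (h / (s + h)) κ (fun κ' => shortPotential h s (hit β one3 :: κ')) ≤
      6 * Real.exp (-(tilt * (1 / 10 ^ 5) / h)) := by
  have hs0 := hs.fraction_pos
  have hw' : ∀ k ∈ one3 :: κ, shortWeight (occTilt (s + h)) k = 1 := by
    refine List.forall_mem_cons.2 ⟨rfl, fun k hk => ?_⟩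
    rcases hκ' k hk with rfl | rfl
    exacts [rfl, pow_zero _]
  refine (hs.exposeMean_shortPotential_cons_le (c := 6 * Real.exp (-(tilt * (1 / 10 ^ 5) / h)))
    ?_).trans_eq (by rw [prod_map_eq_one hw', mul_one])
  have hexp : Real.exp (-(tilt * shortDensity s / h)) ≤ Real.exp (-(tilt * (1 / 10 ^ 5) / h)) := by
    have hD := shortDensity_ge (s := s) (by linarith [hs.add_le, hs.pos])
    have := tilt_pos
    have := hs.pos
    gcongr
  have hy : occTilt s ^ 2 ≤ 2 := by
    have : tilt / s ≤ 1 / 10 := by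
      rw [div_le_iff₀ hs0]
      unfold tilt
      linarith [hs.ge]
    nlinarith [one_le_occTilt hs0.le, show occTilt s = 1 + tilt / s from rfl]
  have hX : Real.exp (3 * (h / (s + h)) * (occTilt s ^ 2 - 1) * κ.count one3) ≤ 3 := by
    refine le_trans (Real.exp_le_exp.2 ?_) (Real.exp_one_lt_d9.le.trans (by norm_num))
    refine (hs.one3_error_le hκ).trans ?_
    unfold tilt
    linarith [hs.add_le]
  calc Real.exp (-(tilt * shortDensity s / h)) * occTilt s ^ 2 *
        Real.exp (3 * (h / (s + h)) * (occTilt s ^ 2 - 1) * κ.count one3)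
      ≤ Real.exp (-(tilt * (1 / 10 ^ 5) / h)) * 2 * 3 := by gcongr
    _ = 6 * Real.exp (-(tilt * (1 / 10 ^ 5) / h)) * shortWeight (occTilt (s + h)) one3 := by
        rw [shortWeight, if_pos rfl]
        ring

end Admissible

/-! ### Forced variables -/

lemma exp_sub_one_le {x ε : ℝ} (hx : 0 ≤ x) (hxε : x ≤ ε) (hε : ε ≤ 1) :
    Real.exp x - 1 ≤ x * (1 + ε) := by
  have h := (abs_le.1 (Real.abs_exp_sub_one_sub_id_le (abs_le.2 ⟨by linarith, hxε.trans hε⟩))).2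
  nlinarith

lemma exp_neg_le_one_sub_half {x : ℝ} (hx : 0 ≤ x) (hx1 : x ≤ 1) : Real.exp (-x) ≤ 1 - x / 2 := by
  have hinv : Real.exp (-x) * (x + 1) ≤ 1 := by
    have := mul_le_mul_of_nonneg_left (Real.add_one_le_exp x) (Real.exp_pos (-x)).le
    rwa [← Real.exp_add, neg_add_cancel, Real.exp_zero] at this
  nlinarith [Real.exp_pos (-x)]

lemma exp_forcedTilt_sub_le (c : ℝ) :
    Real.exp (forcedTilt * (c - 1 / (2 * 10 ^ 4))) ≤ (1 - gain) * Real.exp (forcedTilt * c) := by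
  have hdecay : Real.exp (-(2 * gain)) ≤ 1 - gain := by
    have hgain : 2 * gain ≤ 1 := by norm_num [gain, forcedTilt]
    linarith [exp_neg_le_one_sub_half (mul_pos two_pos gain_pos).le hgain]
  calc Real.exp (forcedTilt * (c - 1 / (2 * 10 ^ 4)))
      = Real.exp (-(2 * gain)) * Real.exp (forcedTilt * c) := by
        rw [← Real.exp_add, gain]
        ring_nf
    _ ≤ _ := by gcongr

/-- The value given to the variables of a constraint when they are exposed: the only one that does
not violate it if all its variables are forced. -/
def Kind.value : Kind → Bool
  | zero2 | zero1 => false | _ => true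

lemma aliveWeight_hit_value {k : Kind} (hk : aliveWeight k = 1) :
    aliveWeight (hit k.value k) = 1 := by
  cases k <;> simp_all [aliveWeight, Kind.value, hit]

lemma forcedPotential_cons (s : ℝ) (k : Kind) (κ : List Kind) :
    forcedPotential s (k :: κ) =
      forcedWeight (Real.exp (forcedTilt * offspring s)) (Real.exp forcedTilt) k *
        forcedPotential s κ := by
  rw [forcedPotential, List.map_cons, List.prod_cons, forcedPotential]

lemma forcedPotential_eq_one (s : ℝ) {κ : List Kind} (hκ : ∀ k ∈ κ, forcedCount k = 0) :
    forcedPotential s κ = 1 :=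
  prod_map_eq_one fun k hk => by
    have := hκ k hk
    cases k <;> simp_all [forcedCount, forcedWeight]

lemma sum_forcedCount_le_forcedPotential {s : ℝ} (hs : s ≤ 1) (κ : List Kind) :
    forcedTilt / 10 ^ 4 * (κ.map forcedCount).sum ≤ forcedPotential s κ := by
  have ht := forcedTilt_pos
  have hoff : forcedTilt / 10 ^ 4 ≤ forcedTilt * offspring s := by
    rw [div_eq_mul_one_div]
    gcongr
    exact offspring_ge hs
  have hexp : Real.exp (forcedTilt / 10 ^ 4 * (κ.map forcedCount).sum) ≤ forcedPotential s κ := by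
    rw [← List.sum_map_mul_left, Real.exp_list_sum, List.map_map]
    refine List.prod_map_le_prod_map₀ _ _ (fun k _ => (Real.exp_pos _).le) fun k _ => ?_
    cases k <;> simp only [Function.comp_apply, forcedCount, forcedWeight, ← Real.exp_nat_mul,
      mul_zero, Real.exp_zero, le_refl, Real.exp_le_exp] <;> push_cast <;> linarith
  linarith [Real.add_one_le_exp (forcedTilt / 10 ^ 4 * (κ.map forcedCount).sum)]

namespace Admissible

variable {h s : ℝ} (hs : Admissible h s)

include hs

lemma true_error_le {κ : List Kind} (hκ : Balanced h (s + h) κ) :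
    3 * (h / (s + h)) * (Real.exp forcedTilt ^ 2 - 1) * κ.count one3 +
        2 * (h / (s + h)) * (Real.exp forcedTilt - 1) * κ.count one2 ≤
      forcedTilt * (offspring (s + h) - 1 / (2 * 10 ^ 4)) := by
  have ht := forcedTilt_pos
  have h1 : Real.exp forcedTilt - 1 ≤ forcedTilt * (1 + 1 / 10 ^ 6) :=
    exp_sub_one_le ht.le (by norm_num [forcedTilt]) (by norm_num)
  have h2 : Real.exp forcedTilt ^ 2 - 1 ≤ 2 * forcedTilt * (1 + 2 / 10 ^ 6) := by
    rw [← Real.exp_nat_mul]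
    exact exp_sub_one_le (by positivity) (by norm_num [forcedTilt]) (by norm_num)
  have h3 := hκ.one3_le
  have h4 := hκ.one2_le
  calc 3 * (h / (s + h)) * (Real.exp forcedTilt ^ 2 - 1) * κ.count one3 +
        2 * (h / (s + h)) * (Real.exp forcedTilt - 1) * κ.count one2
      = 3 * ((Real.exp forcedTilt ^ 2 - 1) * (h / (s + h) * κ.count one3)) +
          (Real.exp forcedTilt - 1) * (h / (s + h) * (2 * κ.count one2)) := by ring
    _ ≤ 3 * (2 * forcedTilt * (1 + 2 / 10 ^ 6) * (0.54602 * (s + h) ^ 2)) +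
          forcedTilt * (1 + 1 / 10 ^ 6) * ((1 + 1 / 10 ^ 8) * shortDensity (s + h)) := by
        have := hs.prob_nonneg
        gcongr
    _ = forcedTilt * (6 * (1 + 2 / 10 ^ 6) * (0.54602 * (s + h) ^ 2) +
          (1 + 1 / 10 ^ 6) * ((1 + 1 / 10 ^ 8) * shortDensity (s + h))) := by ring
    _ ≤ forcedTilt * (offspring (s + h) - 1 / (2 * 10 ^ 4)) := by
        refine mul_le_mul_of_nonneg_left ?_ ht.le
        have hsq : (s + h) ^ 2 ≤ 1 := pow_le_one₀ hs.add_pos.le hs.add_le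
        unfold offspring
        linarith [shortDensity_le hs.add_le, shortDensity_ge hs.add_le]

lemma false_error_le {κ : List Kind} (hκ : Balanced h (s + h) κ) :
    2 * (h / (s + h)) * (Real.exp (forcedTilt * offspring s) - 1) * κ.count one2 ≤
      forcedTilt * (1 - 1 / (2 * 10 ^ 4)) := by
  have ht := forcedTilt_pos
  have hs1 : s ≤ s + h := by linarith [hs.pos]
  have hoff0 : 0 ≤ offspring s := le_trans (by norm_num) (offspring_ge (hs1.trans hs.add_le))
  have hoff : offspring s ≤ offspring (s + h) := offspring_mono hs.fraction_pos.le hs1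
  have hoff5 : offspring s ≤ 5 := offspring_le hs.fraction_pos.le (hs1.trans hs.add_le)
  have hexp : Real.exp (forcedTilt * offspring s) - 1 ≤
      forcedTilt * offspring s * (1 + 1 / 10 ^ 5) := by
    refine exp_sub_one_le (by positivity) ?_ (by norm_num)
    unfold forcedTilt
    linarith
  have h2 := hκ.one2_le
  calc 2 * (h / (s + h)) * (Real.exp (forcedTilt * offspring s) - 1) * κ.count one2
      = (Real.exp (forcedTilt * offspring s) - 1) * (h / (s + h) * (2 * κ.count one2)) := by ring
    _ ≤ forcedTilt * offspring (s + h) * (1 + 1 / 10 ^ 5) *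
          ((1 + 1 / 10 ^ 8) * shortDensity (s + h)) := by
        have := hs.prob_nonneg
        have := hoff0.trans hoff
        have : 0 ≤ shortDensity (s + h) := le_trans (by norm_num) (shortDensity_ge hs.add_le)
        gcongr
        exact hexp.trans (by gcongr)
    _ = forcedTilt * ((1 + 1 / 10 ^ 5) * (1 + 1 / 10 ^ 8) *
          (shortDensity (s + h) * offspring (s + h))) := by ring
    _ ≤ forcedTilt * ((1 + 1 / 10 ^ 5) * (1 + 1 / 10 ^ 8) * (1 - 1 / 10 ^ 4)) := by
        gcongr
        exact shortDensity_mul_offspring_le hs.add_pos.le hs.add_le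
    _ ≤ forcedTilt * (1 - 1 / (2 * 10 ^ 4)) := by
        refine mul_le_mul_of_nonneg_left ?_ ht.le
        norm_num

lemma one_le_exp_offspring : 1 ≤ Real.exp (forcedTilt * offspring s) :=
  Real.one_le_exp (mul_nonneg forcedTilt_pos.le
    (le_trans (by norm_num) (offspring_ge (by linarith [hs.add_le, hs.pos]))))

lemma exp_offspring_le : Real.exp (forcedTilt * offspring s) ≤
    Real.exp (forcedTilt * offspring (s + h)) :=
  Real.exp_le_exp.2 (mul_le_mul_of_nonneg_left
    (offspring_mono hs.fraction_pos.le (by linarith [hs.pos])) forcedTilt_pos.le)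

lemma exposeMean_true_forcedPotential_le {κ : List Kind} (hκ : Balanced h (s + h) κ) :
    exposeMean true (h / (s + h)) κ (forcedPotential s) ≤
      (1 - gain) * Real.exp (forcedTilt * offspring (s + h)) * forcedPotential (s + h) κ := by
  refine (exposeMean_prod_le hs.prob_nonneg hs.three_mul_prob_le true
    (fun k => (forcedWeight_pos (Real.exp_pos _) (Real.exp_pos _) k).le)
    (drift_forcedWeight_true_le hs.prob_nonneg hs.one_le_exp_offspring hs.exp_offspring_le
      (Real.one_le_exp forcedTilt_pos.le)) κ).trans ?_
  rw [List.sum_map_add, sum_map_ite_eq_mul_count, sum_map_ite_eq_mul_count, mul_comm]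
  exact mul_le_mul_of_nonneg_right
    ((Real.exp_le_exp.2 (hs.true_error_le hκ)).trans (exp_forcedTilt_sub_le _))
    (forcedPotential_nonneg (s + h) κ)

lemma exposeMean_false_forcedPotential_le {κ : List Kind} (hκ : Balanced h (s + h) κ) :
    exposeMean false (h / (s + h)) κ (forcedPotential s) ≤
      (1 - gain) * Real.exp forcedTilt * forcedPotential (s + h) κ := by
  refine (exposeMean_prod_le hs.prob_nonneg hs.three_mul_prob_le false
    (fun k => (forcedWeight_pos (Real.exp_pos _) (Real.exp_pos _) k).le)
    (drift_forcedWeight_false_le hs.prob_nonneg hs.one_le_exp_offspring hs.exp_offspring_le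
      (Real.one_le_exp forcedTilt_pos.le)) κ).trans ?_
  rw [sum_map_ite_eq_mul_count, mul_comm]
  have hdecay := exp_forcedTilt_sub_le 1
  rw [mul_one] at hdecay
  exact mul_le_mul_of_nonneg_right
    ((Real.exp_le_exp.2 (hs.false_error_le hκ)).trans hdecay) (forcedPotential_nonneg (s + h) κ)

lemma exposeMean_forcedPotential_of_forced_le {k : Kind} (hk : forcedCount k ≠ 0) {κ : List Kind}
    (hκ : Balanced h (s + h) κ) :
    exposeMean k.value (h / (s + h)) κ (fun κ' => forcedPotential s (hit k.value k :: κ')) ≤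
      (1 - gain) * forcedPotential (s + h) (k :: κ) := by
  have htrue := hs.exposeMean_true_forcedPotential_le hκ
  have hfalse := hs.exposeMean_false_forcedPotential_le hκ
  simp only [forcedPotential_cons, exposeMean_mul_left]
  cases k <;> simp only [forcedCount, ne_eq, not_true_eq_false] at hk <;>
    simp only [Kind.value, hit, forcedWeight]
  · linarith
  · linarith [mul_le_mul_of_nonneg_left hfalse (Real.exp_pos forcedTilt).le]
  · linarith

lemma exposeMean_forcedPotential_of_free_le {k : Kind} (hk : k = one2 ∨ k = one3) {κ : List Kind}
    (hκ : Balanced h (s + h) κ) (hκ' : ∀ k ∈ κ, forcedCount k = 0) :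
    exposeMean true (h / (s + h)) κ (fun κ' => forcedPotential s (hit true k :: κ')) ≤ 2 := by
  have ht := forcedTilt_pos
  have htrue : exposeMean true (h / (s + h)) κ (forcedPotential s) ≤ Real.exp (forcedTilt * 5) := by
    refine (hs.exposeMean_true_forcedPotential_le hκ).trans ?_
    rw [forcedPotential_eq_one _ hκ', mul_one]
    refine (mul_le_of_le_one_left (Real.exp_pos _).le (by linarith [gain_pos])).trans ?_
    gcongr
    exact offspring_le hs.add_pos.le hs.add_le
  have hweight : forcedWeight (Real.exp (forcedTilt * offspring s)) (Real.exp forcedTilt)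
      (hit true k) ≤ Real.exp forcedTilt ^ 2 := by
    rcases hk with rfl | rfl
    · exact le_self_pow₀ (Real.one_le_exp ht.le) two_ne_zero
    · exact le_rfl
  simp only [forcedPotential_cons, exposeMean_mul_left]
  calc _ ≤ forcedWeight (Real.exp (forcedTilt * offspring s)) (Real.exp forcedTilt) (hit true k) *
          Real.exp (forcedTilt * 5) :=
        mul_le_mul_of_nonneg_left htrue (forcedWeight_pos (Real.exp_pos _) (Real.exp_pos _) _).le
    _ ≤ Real.exp forcedTilt ^ 2 * Real.exp (forcedTilt * 5) := by gcongr
    _ = Real.exp (forcedTilt * 7) := by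
        rw [← Real.exp_nat_mul, ← Real.exp_add]
        ring_nf
    _ ≤ 2 := by
        have := exp_sub_one_le (x := forcedTilt * 7) (ε := 1 / 2) (by positivity)
          (by norm_num [forcedTilt]) (by norm_num)
        unfold forcedTilt at *
        linarith

/-! ### The drift of the potential -/

lemma le_exposeMean_potential (β : Bool) {k : Kind} (hk : k.size ≠ 0)
    (hhit : aliveWeight (hit β k) = 1) {κ : List Kind} (hκ : ∀ i ∈ κ, aliveWeight i = 1) {E Q : ℝ}
    (hE : exposeMean β (h / (s + h)) κ (fun κ' => forcedPotential s (hit β k :: κ')) ≤ E)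
    (hQ : exposeMean β (h / (s + h)) κ (fun κ' => shortPotential h s (hit β k :: κ')) ≤ Q) :
    Real.exp (-(freeCost * s)) *
          (1 - h / (s + h) * (κ.map forcedCount).sum - forcedScale * h * E) -
        one3Potential h (s + h) (k :: κ) - occPotential h (s + h) (k :: κ) - Q ≤
      exposeMean β (h / (s + h)) κ (fun κ' => potential h s (hit β k :: κ')) := by
  set μ := exposeMean β (h / (s + h)) κ
  have hexpand : μ (fun κ' => potential h s (hit β k :: κ')) =
      Real.exp (-(freeCost * s)) * (μ (fun κ' => ((hit β k :: κ').map aliveWeight).prod) -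
        forcedScale * h * μ (fun κ' => forcedPotential s (hit β k :: κ'))) -
      μ (fun κ' => one3Potential h s (hit β k :: κ')) -
      μ (fun κ' => occPotential h s (hit β k :: κ')) -
      μ (fun κ' => shortPotential h s (hit β k :: κ')) := by
    simp only [← smul_eq_mul, ← map_smul, ← map_sub]
    rfl
  have halive : 1 - h / (s + h) * (κ.map forcedCount).sum ≤
      μ (fun κ' => ((hit β k :: κ').map aliveWeight).prod) := by
    simp only [List.map_cons, List.prod_cons, hhit, one_mul]
    exact one_sub_le_exposeMean_alive hs.prob_nonneg hs.three_mul_prob_le β hκ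
  have hmain : Real.exp (-(freeCost * s)) *
        (1 - h / (s + h) * (κ.map forcedCount).sum - forcedScale * h * E) ≤
      Real.exp (-(freeCost * s)) * (μ (fun κ' => ((hit β k :: κ').map aliveWeight).prod) -
        forcedScale * h * μ (fun κ' => forcedPotential s (hit β k :: κ'))) := by
    have := mul_pos forcedScale_pos hs.pos
    gcongr
  rw [hexpand]
  linarith [hs.exposeMean_one3Potential_le β k κ, hs.exposeMean_occPotential_le β hk κ]

lemma prob_mul_sum_forcedCount_le (κ : List Kind) :
    h / (s + h) * (κ.map forcedCount).sum ≤
      forcedScale * h * (gain * forcedPotential (s + h) κ) := by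
  have hsum : 0 ≤ (κ.map forcedCount).sum :=
    List.sum_nonneg (List.forall_mem_map.2 fun k _ => forcedCount_nonneg k)
  have hh := hs.pos
  have ht := forcedTilt_pos
  calc h / (s + h) * (κ.map forcedCount).sum ≤ 10 * h * (κ.map forcedCount).sum := by
        gcongr
        exact hs.prob_le
    _ = forcedScale * h * (gain * (forcedTilt / 10 ^ 4 * (κ.map forcedCount).sum)) := by
        have := gain_pos
        unfold forcedScale
        field_simp
    _ ≤ forcedScale * h * (gain * forcedPotential (s + h) κ) := by
        have := forcedScale_pos
        have := gain_pos
        gcongr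
        exact sum_forcedCount_le_forcedPotential hs.add_le κ

lemma balanced {κ : List Kind} (hpos : 0 < potential h (s + h) κ) : Balanced h (s + h) κ :=
  balanced_of_potential_pos hs.pos (by linarith [hs.ge, hs.pos]) hs.add_le hpos

/-- The decrease of the potential of forced variables pays for the probability of a
contradiction. -/
lemma potential_le_exposeMean_of_forced {k : Kind} (hk : forcedCount k ≠ 0) {κ : List Kind}
    (hpos : 0 < potential h (s + h) (k :: κ)) :
    potential h (s + h) (k :: κ) ≤
      exposeMean k.value (h / (s + h)) κ (fun κ' => potential h s (hit k.value k :: κ')) := by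
  have hbal := hs.balanced hpos
  have hbal' := hbal.of_perm_cons hs.prob_nonneg (List.Perm.refl _)
  have hsize : k.size ≠ 0 := by cases k <;> simp_all [forcedCount, size]
  have hk3 : k ≠ one3 := by rintro rfl; exact hk rfl
  refine le_trans ?_ (hs.le_exposeMean_potential _ hsize
    (aliveWeight_hit_value (hbal.alive k List.mem_cons_self)) hbal'.alive
    (hs.exposeMean_forcedPotential_of_forced_le hk hbal')
    (hs.exposeMean_shortPotential_le _ hsize hk3 hbal'.one3_le))
  have hexp : Real.exp (-(freeCost * (s + h))) ≤ Real.exp (-(freeCost * s)) := by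
    have := freeCost_pos
    have := hs.pos
    gcongr
    linarith
  have hsum := hs.prob_mul_sum_forcedCount_le (k :: κ)
  rw [List.map_cons, List.sum_cons, mul_add] at hsum
  have hcount : 0 ≤ h / (s + h) * forcedCount k :=
    mul_nonneg hs.prob_nonneg (forcedCount_nonneg k)
  have hmain : Real.exp (-(freeCost * (s + h))) * (((k :: κ).map aliveWeight).prod -
      forcedScale * h * forcedPotential (s + h) (k :: κ)) ≤
      Real.exp (-(freeCost * s)) * (1 - h / (s + h) * (κ.map forcedCount).sum -
        forcedScale * h * ((1 - gain) * forcedPotential (s + h) (k :: κ))) := by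
    have hlt := forcedPotential_lt_of_potential_pos hs.add_pos.le hpos
    calc _ ≤ Real.exp (-(freeCost * (s + h))) *
          (1 - forcedScale * h * forcedPotential (s + h) (k :: κ)) := by
          gcongr
          exact prod_aliveWeight_le_one _
      _ ≤ _ := mul_le_mul hexp (by linarith) (by linarith) (Real.exp_pos _).le
  rw [potential]
  linarith

lemma exp_freeCost_add_le :
    Real.exp (-(freeCost * (s + h))) ≤
      Real.exp (-(freeCost * s)) * (1 - (2 * forcedScale + 1) * h) := by
  have hhalf : Real.exp (-(freeCost * h)) ≤ 1 - freeCost * h / 2 :=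
    exp_neg_le_one_sub_half (mul_nonneg freeCost_pos.le hs.pos.le)
      (hs.freeCost_mul_le.trans (by norm_num))
  calc Real.exp (-(freeCost * (s + h)))
      = Real.exp (-(freeCost * s)) * Real.exp (-(freeCost * h)) := by
        rw [← Real.exp_add]
        ring_nf
    _ ≤ Real.exp (-(freeCost * s)) * (1 - freeCost * h / 2) := by gcongr
    _ = Real.exp (-(freeCost * s)) * (1 - (2 * forcedScale + 1) * h) := by
        unfold freeCost
        ring

lemma exposeMean_shortPotential_of_free_le {k : Kind} (hk : k = one2 ∨ k = one3) {κ : List Kind}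
    (hκ : h / (s + h) * κ.count one3 ≤ 0.54602 * (s + h) ^ 2)
    (hκ' : k = one3 → ∀ i ∈ κ, i = one3 ∨ i = sat) :
    exposeMean true (h / (s + h)) κ (fun κ' => shortPotential h s (hit true k :: κ')) ≤
      shortPotential h (s + h) (k :: κ) + Real.exp (-freeCost) * h := by
  rcases hk with rfl | rfl
  · exact (hs.exposeMean_shortPotential_le true two_ne_zero (by decide) hκ).trans
      (le_add_of_nonneg_right (mul_nonneg (Real.exp_pos _).le hs.pos.le))
  · exact ((hs.exposeMean_shortPotential_one3_le true hκ (hκ' rfl)).trans hs.exp_le).trans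
      (le_add_of_nonneg_left (shortPotential_nonneg h hs.add_pos.le _))

/-- The growth of `exp (-(freeCost * s))` as variables are used up pays for the exposure of
variables that are not forced. -/
lemma potential_le_exposeMean_of_free {k : Kind} (hk : k = one2 ∨ k = one3) {κ : List Kind}
    (hκ : ∀ i ∈ κ, forcedCount i = 0) (hκ' : k = one3 → ∀ i ∈ κ, i = one3 ∨ i = sat)
    (hpos : 0 < potential h (s + h) (k :: κ)) :
    potential h (s + h) (k :: κ) ≤
      exposeMean true (h / (s + h)) κ (fun κ' => potential h s (hit true k :: κ')) := by
  have hbal := (hs.balanced hpos).of_perm_cons hs.prob_nonneg (List.Perm.refl _)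
  have hsize : k.size ≠ 0 := by rcases hk with rfl | rfl <;> decide
  have hhit : aliveWeight (hit true k) = 1 := by rcases hk with rfl | rfl <;> rfl
  refine le_trans ?_ (hs.le_exposeMean_potential _ hsize hhit hbal.alive
    (hs.exposeMean_forcedPotential_of_free_le hk hbal hκ)
    (hs.exposeMean_shortPotential_of_free_le hk hbal.one3_le hκ'))
  have hsum : (κ.map forcedCount).sum = 0 := List.sum_eq_zero (List.forall_mem_map.2 hκ)
  have hexp : Real.exp (-freeCost) * h ≤ Real.exp (-(freeCost * s)) * h := by
    have := hs.pos
    gcongr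
    exact mul_le_of_le_one_right freeCost_pos.le (by linarith [hs.add_le])
  have hmain : Real.exp (-(freeCost * (s + h))) * (((k :: κ).map aliveWeight).prod -
      forcedScale * h * forcedPotential (s + h) (k :: κ)) ≤ Real.exp (-(freeCost * (s + h))) := by
    have := mul_nonneg (mul_pos forcedScale_pos hs.pos).le (forcedPotential_nonneg (s + h) (k :: κ))
    refine mul_le_of_le_one_right (Real.exp_pos _).le ?_
    linarith [prod_aliveWeight_le_one (k :: κ)]
  rw [potential, hsum]
  linarith [hs.exp_freeCost_add_le]

/-- Forced variables are exposed first, then variables of constraints of kind `one2`, and last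
variables of constraints of kind `one3`. -/
lemma potential_le_exposeMean {κ : List Kind} (hpos : 0 < potential h (s + h) κ) :
    (∀ k ∈ κ, k = sat) ∨ ∃ k κ', k.size ≠ 0 ∧ κ.Perm (k :: κ') ∧
      potential h (s + h) κ ≤
        exposeMean k.value (h / (s + h)) κ' (fun κ'' => potential h s (hit k.value k :: κ'')) := by
  have halive := (hs.balanced hpos).alive
  have hstep : ∀ k ∈ κ, k.size ≠ 0 → (0 < potential h (s + h) (k :: κ.erase k) →
      potential h (s + h) (k :: κ.erase k) ≤ exposeMean k.value (h / (s + h)) (κ.erase k)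
        (fun κ'' => potential h s (hit k.value k :: κ''))) →
      ∃ k κ', k.size ≠ 0 ∧ κ.Perm (k :: κ') ∧ potential h (s + h) κ ≤
        exposeMean k.value (h / (s + h)) κ' (fun κ'' => potential h s (hit k.value k :: κ'')) := by
    intro k hk hsize hle
    have hperm := List.perm_cons_erase hk
    rw [potential_perm hperm] at hpos ⊢
    exact ⟨k, κ.erase k, hsize, hperm, hle hpos⟩
  by_cases hforced : ∃ k ∈ κ, forcedCount k ≠ 0
  · obtain ⟨k, hk, hk0⟩ := hforced
    exact .inr (hstep k hk (by cases k <;> simp_all [forcedCount, size])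
      (hs.potential_le_exposeMean_of_forced hk0))
  push Not at hforced
  have herase : ∀ k, ∀ i ∈ κ.erase k, forcedCount i = 0 := fun k i hi =>
    hforced i (List.mem_of_mem_erase hi)
  by_cases h2 : one2 ∈ κ
  · exact .inr (hstep one2 h2 two_ne_zero
      (hs.potential_le_exposeMean_of_free (.inl rfl) (herase _) nofun))
  have hkind : ∀ k ∈ κ, k = one3 ∨ k = sat := by
    intro k hk
    have := hforced k hk
    have := halive k hk
    cases k <;> simp_all [forcedCount, aliveWeight]
  by_cases h3 : one3 ∈ κ
  · exact .inr (hstep one3 h3 three_ne_zero (hs.potential_le_exposeMean_of_free (.inr rfl)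
      (herase _) fun _ i hi => hkind i (List.mem_of_mem_erase hi)))
  · exact .inl fun k hk => (hkind k hk).resolve_left fun hk3 => h3 (hk3 ▸ hk)

end Admissible

/-! ### The bound on the probability -/

lemma potential_le_one {h s : ℝ} (hh : 0 ≤ h) (hs : 0 ≤ s) (κ : List Kind) :
    potential h s κ ≤ 1 := by
  linarith [potential_le hh hs κ, one3Potential_nonneg h hs κ, occPotential_nonneg h hs κ,
    shortPotential_nonneg h hs κ]

lemma one_le_occPotential {h s : ℝ} (hh : 0 ≤ h) (hs : 0 < s) (hs8 : s ≤ 1 / 8) (κ : List Kind) :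
    1 ≤ occPotential h s κ := by
  have hlog : Real.log s ≤ -(3 * Real.log 2) := by
    calc Real.log s ≤ Real.log (1 / 8) := Real.log_le_log hs hs8
      _ = Real.log ((2 ^ 3)⁻¹) := by norm_num
      _ = -(3 * Real.log 2) := by rw [Real.log_inv, Real.log_pow]; norm_cast
  refine one_le_mul_of_one_le_of_one_le (Real.one_le_exp ?_)
    (one_le_prod_map (one_le_occWeight (one_le_occTilt hs.le)) κ)
  rw [← neg_div, ← mul_neg]
  exact div_nonneg (mul_nonneg tilt_pos.le (by linarith [Real.log_two_gt_d9])) hh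

lemma potential_nonpos {h s : ℝ} (hh : 0 ≤ h) (hs : 0 < s) (hs8 : s ≤ 1 / 8) (κ : List Kind) :
    potential h s κ ≤ 0 := by
  linarith [potential_le hh hs.le κ, one_le_occPotential hh hs hs8 κ,
    one3Potential_nonneg h hs.le κ, shortPotential_nonneg h hs.le κ]

lemma potential_le_satProb_succ {h : ℝ} {n : ℕ} (hs : Admissible h (n * h))
    (ih : ∀ κ, potential h (n * h) κ ≤ satProb n κ Set.univ) (κ : List Kind) :
    potential h ((n + 1 : ℕ) * h) κ ≤ satProb (n + 1) κ Set.univ := by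
  rw [Nat.cast_succ, add_one_mul]
  rcases le_or_gt (potential h (n * h + h) κ) 0 with hneg | hpos
  · exact hneg.trans (satProb_nonneg κ _)
  rcases hs.potential_le_exposeMean hpos with hsat | ⟨k, κ', hk, hperm, hle⟩
  · rw [satProb_univ_eq_one hsat]
    exact potential_le_one hs.pos.le hs.add_pos.le κ
  have hn : 3 ≤ n := by
    have : (3 : ℝ) ≤ n := by nlinarith [hs.ge, hs.le, hs.pos]
    exact_mod_cast this
  have hq : h / (n * h + h) = 1 / ((n : ℝ) + 1) := by
    have := hs.pos
    field_simp
  calc potential h (n * h + h) κ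
      ≤ exposeMean k.value (h / (n * h + h)) κ'
          (fun κ'' => potential h (n * h) (hit k.value k :: κ'')) := hle
    _ ≤ exposeMean k.value (h / (n * h + h)) κ'
          (fun κ'' => satProb n (hit k.value k :: κ'') Set.univ) :=
        exposeMean_mono hs.prob_nonneg hs.three_mul_prob_le _ _ fun _ => ih _
    _ ≤ satProb (n + 1) (k :: κ') Set.univ := hq ▸ exposeMean_satProb_hit_cons_le hn _ hk κ'
    _ = satProb (n + 1) κ Set.univ := (satProb_perm hperm _).symm

lemma potential_le_satProb {h : ℝ} (hh : Small h) {n : ℕ} (hn : 0 < n) (hnh : n * h ≤ 1)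
    (κ : List Kind) : potential h (n * h) κ ≤ satProb n κ Set.univ := by
  have hh0 := hh.pos
  induction n, hn using Nat.le_induction generalizing κ with
  | base =>
    refine (potential_nonpos hh0.le (by simpa) ?_ κ).trans (satProb_nonneg κ _)
    norm_num
    linarith [hh.le]
  | succ n hn ih =>
    rw [Nat.cast_succ, add_one_mul] at hnh
    rcases le_or_gt (n * h) (1 / 10) with hsmall | hlarge
    · refine (potential_nonpos hh0.le (by positivity) ?_ κ).trans (satProb_nonneg κ _)
      push_cast
      linarith [hh.le]
    · exact potential_le_satProb_succ ⟨hh, hlarge.le, hnh⟩ (ih (by linarith)) κ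

/-! ### The initial formula -/

lemma eventually_small_inv : ∀ᶠ n : ℕ in atTop, Small (n : ℝ)⁻¹ := by
  have hrate : 0 < tilt * (1 / 10 ^ 5) := mul_pos tilt_pos (by norm_num)
  have hinv : Tendsto (fun x : ℝ => freeCost * x⁻¹) atTop (𝓝 0) := by
    simpa using tendsto_inv_atTop_zero.const_mul freeCost
  have hexp := tendsto_rpow_mul_exp_neg_mul_atTop_nhds_zero 1 _ hrate
  suffices ∀ᶠ x : ℝ in atTop, Small x⁻¹ from tendsto_natCast_atTop_atTop.eventually this
  filter_upwards [eventually_gt_atTop 0, eventually_ge_atTop (10 ^ 9),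
    hinv.eventually_le_const one_half_pos,
    hexp.eventually_le_const (div_pos (Real.exp_pos (-freeCost)) (by norm_num : (0 : ℝ) < 6))]
    with x hx0 hx hfree hx_exp
  refine ⟨inv_pos.2 hx0, ?_, hfree, ?_⟩
  · rw [one_div]
    gcongr
  · rw [Real.rpow_one, neg_mul] at hx_exp
    rw [div_inv_eq_mul, ← div_eq_mul_inv, le_div_iff₀ hx0]
    linarith

lemma exp_mul_one_add_tilt_pow_le {h a : ℝ} {j : ℕ} (hh : 0 < h)
    (ha : j * h + 1 / 10 ^ 5 ≤ a) :
    Real.exp (-(tilt * a / h)) * (1 + tilt) ^ j ≤ Real.exp (-(tilt * (1 / 10 ^ 5) / h)) := by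
  have htilt := tilt_pos
  calc Real.exp (-(tilt * a / h)) * (1 + tilt) ^ j
      ≤ Real.exp (-(tilt * a / h)) * Real.exp tilt ^ j := by
        gcongr
        linarith [Real.add_one_le_exp tilt]
    _ = Real.exp (-(tilt * (a - j * h) / h)) := by
        rw [← Real.exp_nat_mul, ← Real.exp_add]
        congr 1
        field_simp
        ring
    _ ≤ Real.exp (-(tilt * (1 / 10 ^ 5) / h)) := by
        gcongr
        linarith

section Start

variable {h : ℝ} {m : ℕ}

lemma one3Potential_replicate_le (hh : 0 < h) (hm : m * h ≤ 0.546) :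
    one3Potential h 1 (List.replicate m one3) ≤ Real.exp (-(tilt * (1 / 10 ^ 5) / h)) := by
  simp only [one3Potential, List.map_replicate, List.prod_replicate, one3Weight, one3Tilt, one_pow,
    div_one]
  exact exp_mul_one_add_tilt_pow_le hh (by linarith)

lemma occPotential_replicate_le (hh : 0 < h) (hm : m * h ≤ 0.546) :
    occPotential h 1 (List.replicate m one3) ≤ Real.exp (-(tilt * (1 / 10 ^ 5) / h)) := by
  simp only [occPotential, List.map_replicate, List.prod_replicate, occWeight, occTilt, div_one,
    ← pow_mul, Real.log_one, size]
  refine exp_mul_one_add_tilt_pow_le hh ?_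
  push_cast
  linarith

lemma shortPotential_replicate (h : ℝ) (m : ℕ) :
    shortPotential h 1 (List.replicate m one3) = Real.exp (-(tilt * (1 / 10 ^ 5) / h)) := by
  have hdensity : shortDensity 1 = 1 / 10 ^ 5 := by norm_num [shortDensity, fluid]
  simp [shortPotential, shortWeight, hdensity]

lemma le_potential_replicate (hh : Small h) (hm : m * h ≤ 0.546) :
    Real.exp (-freeCost) / 2 ≤ potential h 1 (List.replicate m one3) := by
  have hexp := Real.exp_pos (-freeCost)
  have hscale : Real.exp (-freeCost) * (forcedScale * h) ≤ Real.exp (-freeCost) * (1 / 8) := by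
    gcongr
    have hfree := hh.freeCost_mul_le
    unfold freeCost at hfree
    linarith [hh.pos]
  have hsmall : Real.exp (-freeCost) * h ≤ Real.exp (-freeCost) * (1 / 8) := by
    gcongr
    linarith [hh.le]
  have halive : ((List.replicate m one3).map aliveWeight).prod = 1 := by simp [aliveWeight]
  have hforced : forcedPotential 1 (List.replicate m one3) = 1 := by
    simp [forcedPotential, forcedWeight]
  rw [potential, halive, hforced, mul_one, mul_one, shortPotential_replicate]
  linarith [hh.exp_le, one3Potential_replicate_le hh.pos hm, occPotential_replicate_le hh.pos hm]

end Start

end EC3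

theorem ec3_threshold_lower_bound_general :
    ∃ δ > 0, ∀ᶠ n : ℕ in atTop, ∀ m : ℕ, (m : ℝ) ≤ 0.546 * n → δ ≤ Psat n m := by
  refine ⟨Real.exp (-EC3.freeCost) / 2, by positivity, ?_⟩
  filter_upwards [EC3.eventually_small_inv] with n hn m hm
  have hpos : (0 : ℝ) < n := inv_pos.1 hn.pos
  have hcancel : (n : ℝ) * (n : ℝ)⁻¹ = 1 := mul_inv_cancel₀ hpos.ne'
  calc Real.exp (-EC3.freeCost) / 2
      ≤ EC3.potential (n : ℝ)⁻¹ 1 (List.replicate m EC3.Kind.one3) :=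
        EC3.le_potential_replicate hn (by rwa [mul_inv_le_iff₀ hpos])
    _ = EC3.potential (n : ℝ)⁻¹ (n * (n : ℝ)⁻¹) (List.replicate m EC3.Kind.one3) := by rw [hcancel]
    _ ≤ EC3.satProb n (List.replicate m EC3.Kind.one3) Set.univ :=
        EC3.potential_le_satProb hn (Nat.cast_pos.1 hpos) hcancel.le _
    _ = Psat n m := EC3.satProb_replicate_one3_univ n m

/-- If a uniform satisfiability threshold `r*` exists for random EC3 formulas,
then `r* ≥ 0.546`. -/
theorem ec3_threshold_lower_bound (rstar : ℝ) (hpos : 0 < rstar)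
    (hbelow : ∀ r : ℝ, r < rstar →
      Tendsto (fun n : ℕ => Psat n ⌊r * (n : ℝ)⌋₊) atTop (𝓝 1))
    (habove : ∀ r : ℝ, rstar < r →
      Tendsto (fun n : ℕ => Psat n ⌊r * (n : ℝ)⌋₊) atTop (𝓝 0)) :
    0.546 ≤ rstar := by
  obtain ⟨δ, hδ, hbound⟩ := ec3_threshold_lower_bound_general
  exact le_of_not_gt fun hlt => hδ.not_ge (ge_of_tendsto (habove 0.546 hlt)
    (hbound.mono fun n hn => hn _ (Nat.floor_le (by positivity))))
end
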